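/- arXiv:1008.0763 — 4 statements merged into one kernel-verified Lean document; each statement's English description precedes it below -/
import Mathlib

section
/- Let H be a finite abelian group, let 1 < n_1 ≤ … ≤ n_r be integers such that n_s < |H| · Π_{i=1}^{s−1} n_i for each s ∈ [1, r], let G = H ⊕ C_{n_1} ⊕ … ⊕ C_{n_r}, and let k ∈ ℕ with k ≥ 1. Then SD_k(G) ≥ SD_{k+r}(H) + Σ_{i=1}^{r} (n_i − 1). -/
open Multiset

/-- A sequence (finite multiset) over `G` is zero-sumfree if every nonempty
subsequence has nonzero sum. -/
def IsZeroSumfree {G : Type*} [AddCommMonoid G] (S : Multiset G) : Prop :=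
  ∀ T ≤ S, T ≠ 0 → T.sum ≠ 0

/-- A minimal zero-sum sequence: a nonempty sequence with sum zero all of whose
nonempty proper subsequences have nonzero sum. -/
def IsMinimalZeroSum {G : Type*} [AddCommMonoid G] (S : Multiset G) : Prop :=
  S ≠ 0 ∧ S.sum = 0 ∧ ∀ T ≤ S, T ≠ 0 → T ≠ S → T.sum ≠ 0

/-- The cumulated multiplicity of level `ℓ` of a sequence:
`cm_ℓ(S) = Σ_{g ∈ G} max {0, v_g(S) − ℓ}`. -/
noncomputable def cmul {G : Type*} [AddCommMonoid G] (ℓ : ℕ) (S : Multiset G) : ℕ :=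
  letI := Classical.decEq G
  ∑ g ∈ S.toFinset, (S.count g - ℓ)

/-- `SD_{(k,ℓ)}(G)`: the maximum length of a minimal zero-sum sequence `S` over `G`
with `cm_ℓ(S) ≤ k`. -/
noncomputable def SDpair (G : Type*) [AddCommMonoid G] (k ℓ : ℕ) : ℕ :=
  sSup {m | ∃ S : Multiset G, IsMinimalZeroSum S ∧ cmul ℓ S ≤ k ∧ Multiset.card S = m}

/-- `SD_k(G)`: the `k`-th Strong Davenport constant. -/
noncomputable def SDk (G : Type*) [AddCommMonoid G] (k : ℕ) : ℕ := SDpair G k 1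

/-- The Strong Davenport constant `SD(G) = SD_0(G)`. -/
noncomputable def SD (G : Type*) [AddCommMonoid G] : ℕ := SDk G 0

/-- The Olson constant `Ol(G) = SD_1(G)`. -/
noncomputable def Ol (G : Type*) [AddCommMonoid G] : ℕ := SDk G 1

/-- `ol_k(G)`: the maximum length of a zero-sumfree sequence `S` over `G` with
`cm(S) ≤ k`. -/
noncomputable def olk (G : Type*) [AddCommMonoid G] (k : ℕ) : ℕ :=
  sSup {m | ∃ S : Multiset G, IsZeroSumfree S ∧ cmul 1 S ≤ k ∧ Multiset.card S = m}

/-- `Ol_k(G)`: the smallest integer `ℓ` such that every sequence `S` over `G` with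
`cm(S) ≤ k` and `|S| ≥ ℓ` has a nonempty zero-sum subsequence. -/
noncomputable def Olk (G : Type*) [AddCommMonoid G] (k : ℕ) : ℕ :=
  sInf {m | ∀ S : Multiset G, cmul 1 S ≤ k → m ≤ Multiset.card S →
    ∃ T, T ≤ S ∧ T ≠ 0 ∧ T.sum = 0}

/-- The Davenport constant `D(G)`: the maximum length of a minimal zero-sum
sequence over `G`. -/
noncomputable def DavenportD (G : Type*) [AddCommMonoid G] : ℕ :=
  sSup {m | ∃ S : Multiset G, IsMinimalZeroSum S ∧ Multiset.card S = m}

theorem pairing_sum {H : Type*} [AddCommGroup H] (h2 : ∀ x : H, x + x = 0) (d : H) (hd : d ≠ 0)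
    (m : ℕ) : ∀ A : Finset H, A.card = m → (∀ x ∈ A, x + d ∈ A) →
      (∑ x ∈ A, x = 0 ∨ ∑ x ∈ A, x = d) := by
  classical
  induction m using Nat.strong_induction_on with
  | _ m ih =>
    intro A hA hper
    rcases A.eq_empty_or_nonempty with rfl | ⟨a, ha⟩
    · left; simp
    have hne : a + d ≠ a := by simpa using hd
    have h1 : a + d ∈ A.erase a := Finset.mem_erase.2 ⟨hne, hper a ha⟩
    have hc1 := Finset.card_erase_lt_of_mem ha
    have hc2 := Finset.card_erase_lt_of_mem h1
    have e1 := Finset.add_sum_erase A (fun x => x) ha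
    have e2 := Finset.add_sum_erase (A.erase a) (fun x => x) h1
    have key := ih _ (by omega) ((A.erase a).erase (a + d)) rfl (by
      intro x hx
      simp only [Finset.mem_erase] at hx ⊢
      refine ⟨?_, ?_, hper x hx.2.2⟩
      · intro h; exact hx.2.1 (add_right_cancel h)
      · intro h; apply hx.1
        rw [← h, add_assoc, h2, add_zero])
    rw [← e1, ← e2]
    have : ∀ z, a + (a + d + z) = d + z := by
      intro z; rw [← add_assoc, ← add_assoc, h2, zero_add]
    rw [this]
    rcases key with h | h <;> rw [h]
    · right; simp
    · left; exact h2 d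

/-- Subsets of prescribed size with prescribed nonzero sum. -/
theorem exists_finset_sum {H : Type*} [AddCommGroup H] [Fintype H] (g : H) (hg : g ≠ 0)
    (n : ℕ) (hn0 : 0 < n) (hn : n < Fintype.card H) :
    ∃ A : Finset H, A.card = n ∧ ∑ x ∈ A, x = g := by
  classical
  by_contra hcon
  push Not at hcon
  have swapc : ∀ A : Finset H, A.card = n → ∀ a ∈ A, ∀ b, b ∉ A →
      (insert b (A.erase a)).card = n ∧
        ∑ x ∈ insert b (A.erase a), x = ∑ x ∈ A, x + b - a := by
    intro A hA a ha b hb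
    have hb' : b ∉ A.erase a := fun h => hb (Finset.mem_of_mem_erase h)
    constructor
    · rw [Finset.card_insert_of_notMem hb', Finset.card_erase_of_mem ha]; omega
    · rw [Finset.sum_insert hb', ← Finset.add_sum_erase A (fun x => x) ha]; abel
  have P : ∀ A : Finset H, A.card = n → ∀ a ∈ A, a + (g - ∑ x ∈ A, x) ∈ A := by
    intro A hA a ha
    by_contra h
    obtain ⟨h1, h2⟩ := swapc A hA a ha _ h
    apply hcon _ h1
    rw [h2]; abel
  have Q : ∀ A : Finset H, A.card = n → ∀ a, a + (g - ∑ x ∈ A, x) ∈ A → a ∈ A := by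
    intro A hA a ha
    have him : A.image (fun x => x + (g - ∑ x ∈ A, x)) = A := by
      apply Finset.eq_of_subset_of_card_le
      · intro y hy
        obtain ⟨x, hx, rfl⟩ := Finset.mem_image.1 hy
        exact P A hA x hx
      · rw [Finset.card_image_of_injective _ (add_left_injective _)]
    obtain ⟨x, hx, hxe⟩ := Finset.mem_image.1 (him.symm ▸ ha : a + (g - ∑ x ∈ A, x) ∈ A.image (fun x => x + (g - ∑ x ∈ A, x)))
    rwa [← add_right_cancel hxe]
  have main : ∀ A : Finset H, A.card = n → ∀ a ∈ A, ∀ b, b ∉ A → a + a = b + b := by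
    intro A hA a ha b hb
    obtain ⟨hc, hsum⟩ := swapc A hA a ha b hb
    have hPA := P A hA
    have hQA := Q A hA
    have hd : g - ∑ x ∈ A, x ≠ 0 := fun h => hcon A hA (sub_eq_zero.1 h).symm
    have hP := P _ hc
    have hQ := Q _ hc
    have hde : g - ∑ x ∈ insert b (A.erase a), x = (g - ∑ x ∈ A, x) + a - b := by
      rw [hsum]; abel
    rw [hde] at hP hQ
    generalize g - ∑ x ∈ A, x = d at *
    simp only [Finset.mem_insert, Finset.mem_erase] at hP hQ
    have hbd : b + d ∉ A := fun h => hb (hQA b h)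
    have hab : a ≠ b := fun h => hb (h ▸ ha)
    have h0 : ¬ (b + d = b ∨ b + d ≠ a ∧ b + d ∈ A) := by
      rintro (h | h)
      · exact hd (by simpa using h)
      · exact hbd h.2
    have h1 := fun h => h0 (hQ (b + d) h)
    have e1 : b + d + (d + a - b) = a + d + d := by abel
    rw [e1] at h1
    have h2d : d + d = 0 := by
      by_contra hne
      apply h1
      right
      refine ⟨?_, hPA _ (hPA _ ha)⟩
      intro h; apply hne; rw [add_assoc] at h; simpa using h
    have h2 := fun h => h1 (hQ _ h)
    have e2 : a + d + d + (d + a - b) = a + a - b + d := by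
      calc _ = a + a - b + d + (d + d) := by abel
        _ = _ := by rw [h2d, add_zero]
    rw [e2] at h2
    have h3 := hP (a + d) (Or.inr ⟨by simpa using hd, hPA _ ha⟩)
    have e3 : a + d + (d + a - b) = a + a - b := by
      calc _ = a + a - b + (d + d) := by abel
        _ = _ := by rw [h2d, add_zero]
    rw [e3] at h3
    rcases h3 with h3 | h3
    · exact sub_eq_iff_eq_add.1 h3
    · exfalso
      apply h2
      right
      refine ⟨?_, hPA _ h3.2⟩
      intro h
      apply hb
      have : b = a + d := by
        calc b = (a + a + d) - (a + a - b + d) := by abel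
          _ = a + a + d - a := by rw [h]
          _ = a + d := by abel
      rw [this]; exact hPA _ ha
  obtain ⟨A, -, hA⟩ := Finset.exists_subset_card_eq (s := (Finset.univ : Finset H)) (n := n)
    (by rw [Finset.card_univ]; omega)
  obtain ⟨a, ha⟩ : A.Nonempty := Finset.card_pos.1 (by omega)
  obtain ⟨b, hb⟩ : ∃ b, b ∉ A := by
    by_contra h
    push Not at h
    have : A = Finset.univ := Finset.eq_univ_iff_forall.2 h
    rw [this, Finset.card_univ] at hA; omega
  have hall : ∀ x, x + x = a + a := by
    intro x
    by_cases hx : x ∈ A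
    · rw [main A hA x hx b hb, main A hA a ha b hb]
    · rw [main A hA a ha x hx]
  have h2 : ∀ x : H, x + x = 0 := by
    intro x; rw [hall x, ← hall 0, add_zero]
  have hzero : ∀ A : Finset H, A.card = n → ∑ x ∈ A, x = 0 := by
    intro A hA
    have hd : g - ∑ x ∈ A, x ≠ 0 := fun h => hcon A hA (sub_eq_zero.1 h).symm
    rcases pairing_sum h2 _ hd _ A rfl (P A hA) with h | h
    · exact h
    · exfalso
      apply hg
      have : g = ∑ x ∈ A, x + ∑ x ∈ A, x := by
        nth_rw 1 [h]; abel
      rw [this, h2]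
  obtain ⟨h3, h4⟩ := swapc A hA a ha b hb
  rw [hzero _ h3, hzero _ hA, zero_add, eq_comm, sub_eq_zero] at h4
  exact hb (h4 ▸ ha)

theorem ms_le_map {α β : Type*} (f : α → β) (s : Multiset α) :
    ∀ t : Multiset β, t ≤ s.map f → ∃ u ≤ s, u.map f = t := by
  classical
  induction s using Multiset.induction_on with
  | empty => intro t ht; exact ⟨0, le_rfl, (by simpa using ht : t = 0).symm⟩
  | cons a s ih =>
    intro t ht
    rw [Multiset.map_cons] at ht
    by_cases h : f a ∈ t
    · obtain ⟨t', rfl⟩ := Multiset.exists_cons_of_mem h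
      obtain ⟨u, hu, rfl⟩ := ih t' ((Multiset.cons_le_cons_iff _).1 ht)
      exact ⟨a ::ₘ u, (Multiset.cons_le_cons_iff _).2 hu, by simp⟩
    · obtain ⟨u, hu, rfl⟩ := ih t ((Multiset.le_cons_of_notMem h).1 ht)
      exact ⟨u, hu.trans (Multiset.le_cons_self _ _), rfl⟩

theorem ms_le_add {α : Type*} (s t u : Multiset α) (h : s ≤ t + u) :
    ∃ a ≤ t, ∃ b ≤ u, a + b = s := by
  classical
  refine ⟨s ∩ t, Multiset.inter_le_right, s - t, ?_, ?_⟩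
  · rw [tsub_le_iff_left]; exact h
  · ext x
    simp only [Multiset.count_add, Multiset.count_inter, Multiset.count_sub]
    omega

theorem cmul_one_add {G : Type*} [AddCommMonoid G] [DecidableEq G] (S : Multiset G) :
    cmul 1 S + S.toFinset.card = Multiset.card S := by
  have : cmul 1 S = ∑ g ∈ S.toFinset, (S.count g - 1) := by
    unfold cmul
    congr!
  rw [this, ← Multiset.toFinset_sum_count_eq S, Finset.card_eq_sum_ones, ← Finset.sum_add_distrib]
  apply Finset.sum_congr rfl
  intro x hx
  have := Multiset.count_pos.2 (Multiset.mem_toFinset.1 hx)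
  omega

theorem sdk_bdd (G : Type*) [AddCommMonoid G] [Finite G] (k : ℕ) :
    BddAbove {m | ∃ S : Multiset G, IsMinimalZeroSum S ∧ cmul 1 S ≤ k ∧ Multiset.card S = m} := by
  classical
  have := Fintype.ofFinite G
  refine ⟨k + Fintype.card G, ?_⟩
  rintro m ⟨S, -, hS, rfl⟩
  have h1 := cmul_one_add S
  have h2 := S.toFinset.card_le_univ
  omega

theorem sdk_mem (G : Type*) [AddCommMonoid G] [Finite G] (k : ℕ) :
    ∃ S : Multiset G, IsMinimalZeroSum S ∧ cmul 1 S ≤ k ∧ Multiset.card S = SDk G k := by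
  classical
  apply Nat.sSup_mem (s := {m | ∃ S : Multiset G, IsMinimalZeroSum S ∧ cmul 1 S ≤ k ∧
    Multiset.card S = m}) _ (sdk_bdd G k)
  refine ⟨1, {0}, ⟨by simp, by simp, ?_⟩, ?_, by simp⟩
  · intro T hT h1 h2
    rcases Multiset.le_singleton.1 hT with h | h <;> contradiction
  · have := cmul_one_add ({0} : Multiset G)
    simp at this
    omega

theorem le_sdk {G : Type*} [AddCommMonoid G] [Finite G] {k : ℕ} {S : Multiset G}
    (h1 : IsMinimalZeroSum S) (h2 : cmul 1 S ≤ k) : Multiset.card S ≤ SDk G k :=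
  le_csSup (sdk_bdd G k) ⟨S, h1, h2, rfl⟩

theorem sdk_le_of_injective {G G' : Type*} [AddCommMonoid G] [AddCommMonoid G'] [Finite G]
    [Finite G'] (f : G →+ G') (hf : Function.Injective f) (k : ℕ) : SDk G k ≤ SDk G' k := by
  classical
  obtain ⟨S, ⟨h0, h1, h2⟩, h3, h4⟩ := sdk_mem G k
  rw [← h4, ← Multiset.card_map f S]
  apply le_sdk
  · refine ⟨by simpa using h0, by rw [← map_multiset_sum, h1, _root_.map_zero], ?_⟩
    intro T hT hT0 hTS hs
    obtain ⟨U, hU, rfl⟩ := ms_le_map f S T hT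
    refine h2 U hU (by rintro rfl; simp at hT0) (by rintro rfl; exact hTS rfl) ?_
    rw [← map_multiset_sum] at hs
    exact hf (hs.trans (_root_.map_zero f).symm)
  · have e1 := cmul_one_add S
    have e2 := cmul_one_add (S.map f)
    rw [Multiset.toFinset_map, Finset.card_image_of_injective _ hf, Multiset.card_map] at e2
    omega

theorem glue_minimal {H : Type*} [AddCommGroup H] {n : ℕ} (hn : 1 < n) (g : H) (T A : Multiset H)
    (hS : IsMinimalZeroSum (g ::ₘ T)) (hA : Multiset.card A = n) (hAg : A.sum = g) :
    IsMinimalZeroSum (T.map (fun x => ((x, 0) : H × ZMod n)) +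
      A.map (fun x => ((x, 1) : H × ZMod n))) := by
  classical
  have f1 : ∀ U : Multiset H, (U.map (fun x => ((x, 0) : H × ZMod n))).sum = (U.sum, 0) := by
    intro U
    induction U using Multiset.induction_on with
    | empty => simp; rfl
    | cons a s ih => simp [ih]
  have f2 : ∀ U : Multiset H, (U.map (fun x => ((x, 1) : H × ZMod n))).sum
      = (U.sum, (Multiset.card U : ZMod n)) := by
    intro U
    induction U using Multiset.induction_on with
    | empty => simp; rfl
    | cons a s ih => simp [ih, add_comm]
  obtain ⟨-, hs0, hmin⟩ := hS
  rw [Multiset.sum_cons] at hs0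
  refine ⟨?_, ?_, ?_⟩
  · intro h
    have := congrArg Multiset.card h
    simp at this
    simp [this.2] at hA
    omega
  · rw [Multiset.sum_add, f1, f2, hA, hAg]
    ext
    · simpa [add_comm] using hs0
    · simp
  · intro U hU hU0 hUne hsum
    obtain ⟨U1, h1, U2, h2, rfl⟩ := ms_le_add _ _ _ hU
    obtain ⟨T1, hT1, rfl⟩ := ms_le_map _ _ _ h1
    obtain ⟨A1, hA1, rfl⟩ := ms_le_map _ _ _ h2
    rw [Multiset.sum_add, f1, f2] at hsum
    have hs1 : T1.sum + A1.sum = 0 := congrArg Prod.fst hsum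
    have hs2 : (Multiset.card A1 : ZMod n) = 0 := by
      have := congrArg Prod.snd hsum
      simpa using this
    rw [ZMod.natCast_eq_zero_iff] at hs2
    have hle := Multiset.card_le_card hA1
    rw [hA] at hle
    rcases Nat.eq_zero_or_pos (Multiset.card A1) with hz | hp
    · rw [Multiset.card_eq_zero] at hz
      subst hz
      refine hmin T1 (hT1.trans (Multiset.le_cons_self _ _)) ?_ ?_ (by simpa using hs1)
      · rintro rfl; simp at hU0
      · rintro rfl
        have := Multiset.card_le_card hT1
        simp at this
    · have hcn : Multiset.card A1 = n := le_antisymm hle (Nat.le_of_dvd hp hs2)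
      have : A1 = A := Multiset.eq_of_le_of_card_le hA1 (by omega)
      subst this
      refine hmin (g ::ₘ T1) ((Multiset.cons_le_cons_iff _).2 hT1) (by simp) ?_ ?_
      · intro h
        rw [Multiset.cons_inj_right] at h
        subst h
        exact hUne rfl
      · rw [Multiset.sum_cons, ← hAg, add_comm]; exact hs1

theorem glue_bound {H : Type*} [AddCommGroup H] [Finite H] [DecidableEq H] {n : ℕ} (hn : 1 < n)
    (g : H) (T A : Multiset H)
    (hS : IsMinimalZeroSum (g ::ₘ T)) (hA : Multiset.card A = n) (hAg : A.sum = g) (k : ℕ)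
    (hk : Multiset.card T + n ≤ k + T.toFinset.card + A.toFinset.card) :
    Multiset.card T + n ≤ SDk (H × ZMod n) k := by
  have : NeZero n := ⟨by omega⟩
  have : Fact (1 < n) := ⟨hn⟩
  have hm := glue_minimal hn g T A hS hA hAg
  have hc := cmul_one_add (T.map (fun x => ((x, 0) : H × ZMod n)) +
      A.map (fun x => ((x, 1) : H × ZMod n)))
  rw [Multiset.toFinset_add, Finset.card_union_of_disjoint, Multiset.toFinset_map,
    Multiset.toFinset_map, Finset.card_image_of_injective, Finset.card_image_of_injective] at hc
  · have := le_sdk hm (k := k) (by simp [hA] at hc; omega)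
    simpa [hA] using this
  · intro x y h; exact congrArg Prod.fst h
  · intro x y h; exact congrArg Prod.fst h
  · rw [Finset.disjoint_left]
    intro x hx hy
    simp only [Multiset.mem_toFinset, Multiset.mem_map] at hx hy
    obtain ⟨a, -, rfl⟩ := hx
    obtain ⟨b, -, hb⟩ := hy
    have := congrArg Prod.snd hb
    simp at this

theorem sdk_step (H : Type*) [AddCommGroup H] [Fintype H] (n : ℕ) (hn : 1 < n)
    (hnH : n < Fintype.card H) (k : ℕ) (hk : 1 ≤ k) :
    SDk H (k + 1) + (n - 1) ≤ SDk (H × ZMod n) k := by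
  classical
  obtain ⟨S, hS, hcm, hcard⟩ := sdk_mem H (k + 1)
  have hc := cmul_one_add S
  rw [← hcard]
  by_cases hnd : S.Nodup
  · obtain ⟨g, hg⟩ := Multiset.exists_mem_of_ne_zero hS.1
    obtain ⟨T, rfl⟩ := Multiset.exists_cons_of_mem hg
    obtain ⟨B, -, hB⟩ := Finset.exists_subset_card_eq (s := (Finset.univ : Finset H)) (n := n - 1)
      (by rw [Finset.card_univ]; omega)
    have hTn : T.toFinset.card = Multiset.card T :=
      Multiset.toFinset_card_of_nodup (Multiset.nodup_cons.1 hnd).2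
    have hle : n - 1 ≤ ((g - B.val.sum) ::ₘ B.val).toFinset.card := by
      rw [← hB]
      apply Finset.card_le_card
      intro x hx
      simp [hx]
    have := glue_bound hn g T ((g - B.val.sum) ::ₘ B.val) hS (by simp [hB]; omega) (by simp) k
      (by omega)
    rw [Multiset.card_cons]; omega
  · rw [Multiset.nodup_iff_count_le_one] at hnd
    push Not at hnd
    obtain ⟨g, hg⟩ := hnd
    obtain ⟨T, rfl⟩ := Multiset.exists_cons_of_mem (Multiset.count_pos.1 (by omega) : g ∈ S)
    rw [Multiset.count_cons_self] at hg
    have hgT : g ∈ T := Multiset.count_pos.1 (by omega)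
    have hg0 : g ≠ 0 := by
      rintro rfl
      refine hS.2.2 {0} (by simp) (by simp) ?_ (by simp)
      intro h
      have h1 := congrArg Multiset.card h
      have h2 := Multiset.card_pos_iff_exists_mem.2 ⟨_, hgT⟩
      simp at h1
      simp [h1] at h2
    obtain ⟨A, hA, hAs⟩ := exists_finset_sum g hg0 n (by omega) hnH
    have hTf : (g ::ₘ T).toFinset = T.toFinset := by
      ext x; simp only [Multiset.mem_toFinset, Multiset.mem_cons]
      constructor
      · rintro (rfl | h) <;> assumption
      · exact Or.inr
    rw [hTf, Multiset.card_cons] at hc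
    have := glue_bound hn g T A.val hS hA (by rw [← hAs]; simp) k
      (by rw [Finset.val_toFinset, hA]; omega)
    rw [Multiset.card_cons]; omega

/-- Proposition: for a finite abelian group `H`, integers `1 < n_1 ≤ … ≤ n_r`
with `n_s < |H| · Π_{i<s} n_i` for each `s`, `G = H ⊕ C_{n_1} ⊕ … ⊕ C_{n_r}`
and `k ≥ 1`: `SD_k(G) ≥ SD_{k+r}(H) + Σ_{i=1}^{r} (n_i − 1)`. -/
theorem SDk_split_off_large (H : Type*) [AddCommGroup H] [Fintype H]
    (r : ℕ) (n : Fin r → ℕ) (hn1 : ∀ i, 1 < n i)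
    (hmono : ∀ i j : Fin r, i ≤ j → n i ≤ n j)
    (hs : ∀ s : Fin r, n s < Fintype.card H * ∏ i ∈ Finset.Iio s, n i)
    (k : ℕ) (hk : 1 ≤ k) :
    SDk H (k + r) + ∑ i, (n i - 1) ≤ SDk (H × ∀ i : Fin r, ZMod (n i)) k := by
  induction r generalizing k with
  | zero =>
    simp only [Finset.univ_eq_empty, Finset.sum_empty, add_zero]
    exact sdk_le_of_injective (AddMonoidHom.inl H (∀ i : Fin 0, ZMod (n i)))
      (fun x y h => congrArg Prod.fst h) k
  | succ r ih =>
    have inst : ∀ i, NeZero (n i) := fun i => ⟨by have := hn1 i; omega⟩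
    have h1 := ih (fun i => n i.castSucc) (fun i => hn1 _) (fun i j hij => hmono _ _ (by simpa using hij))
      (by
        intro s
        have := hs s.castSucc
        rw [Fin.Iio_castSucc, Finset.prod_map] at this
        exact this) (k + 1) (by omega)
    have hcard : n (Fin.last r) <
        Fintype.card (H × ∀ i : Fin r, ZMod (n i.castSucc)) := by
      have := hs (Fin.last r)
      rw [Fin.Iio_last_eq_map, Finset.prod_map] at this
      rw [Fintype.card_prod, Fintype.card_pi]
      simpa [ZMod.card] using this
    have h2 := sdk_step (H × ∀ i : Fin r, ZMod (n i.castSucc)) (n (Fin.last r)) (hn1 _) hcard k hk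
    let f : ((H × ∀ i : Fin r, ZMod (n i.castSucc)) × ZMod (n (Fin.last r))) →+
        (H × ∀ i : Fin (r + 1), ZMod (n i)) :=
      { toFun := fun x => (x.1.1, Fin.snoc (α := fun i => ZMod (n i)) x.1.2 x.2)
        map_zero' := by
          refine Prod.ext rfl (funext fun i => ?_)
          refine Fin.lastCases ?_ (fun j => ?_) i <;> simp
        map_add' := by
          intro x y
          refine Prod.ext rfl (funext fun i => ?_)
          refine Fin.lastCases ?_ (fun j => ?_) i <;> simp }
    have hf : Function.Injective f := by
      rintro ⟨⟨a, b⟩, c⟩ ⟨⟨a', b'⟩, c'⟩ h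
      have h1 : a = a' := congrArg Prod.fst h
      have h2 : Fin.snoc (α := fun i => ZMod (n i)) b c = Fin.snoc b' c' := congrArg Prod.snd h
      have h3 : b = b' := by
        funext i
        simpa using congrFun h2 i.castSucc
      have h4 : c = c' := by simpa using congrFun h2 (Fin.last r)
      rw [h1, h3, h4]
    have h3 := sdk_le_of_injective f hf k
    rw [Fin.sum_univ_castSucc]
    have e : k + (r + 1) = k + 1 + r := by omega
    rw [e]
    omega
end

section
/- Let G be a finite abelian group with D(G) = D*(G) (in particular, this holds when G is a p-group) and let k ∈ ℕ₀. If r(G) ≥ exp(G) + 1 − k, then SD_k(G) = D*(G). -/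
open Multiset

/-- The defect form of `cmul 1`. -/
lemma cmul_one_le {G : Type*} [AddCommMonoid G] [inst : DecidableEq G] (S : Multiset G) (k : ℕ)
    (h : card S ≤ card S.dedup + k) : cmul 1 S ≤ k := by
  have e : inst = Classical.decEq G := Subsingleton.elim _ _
  have e2 : cmul 1 S = ∑ g ∈ S.toFinset, (S.count g - 1) := by
    rw [e]
    rfl
  rw [e2]
  have h1 : ∑ g ∈ S.toFinset, (S.count g - 1) + ∑ g ∈ S.toFinset, 1
      = ∑ g ∈ S.toFinset, S.count g := by
    rw [← Finset.sum_add_distrib]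
    refine Finset.sum_congr rfl fun g hg => ?_
    have := Multiset.one_le_count_iff_mem.2 (Multiset.mem_toFinset.1 hg)
    omega
  rw [Multiset.toFinset_sum_count_eq, Finset.sum_const, smul_eq_mul, mul_one] at h1
  have h2 : S.toFinset.card = card S.dedup := rfl
  omega

/-- Replacing one term `h` by `m` terms `e + a` with `a` in `A`. -/
lemma replace_minimal {H G : Type} [AddCommGroup H] [AddCommGroup G] (m : ℕ) (hm : 0 < m)
    (ι : H →+ G) (hι : Function.Injective ι) (π : G →+ ZMod m) (hπ : ∀ x, π (ι x) = 0)
    (e : G) (he : π e = 1) (hme : m • e = 0) (h : H) (R A : Multiset H)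
    (hS : IsMinimalZeroSum (h ::ₘ R)) (hA : card A = m) (hsum : A.sum = h) :
    IsMinimalZeroSum (R.map ι + A.map (fun a => e + ι a)) := by
  classical
  obtain ⟨-, h0, hmin⟩ := hS
  have sumA : ∀ B : Multiset H, (B.map (fun a => e + ι a)).sum = card B • e + ι B.sum := by
    intro B
    rw [Multiset.sum_map_add, Multiset.map_const', Multiset.sum_replicate, map_multiset_sum]
  have sumR : ∀ B : Multiset H, (B.map ι).sum = ι B.sum := by
    intro B
    rw [map_multiset_sum]
  have split : ∀ T ≤ R.map ι + A.map (fun a => e + ι a), ∃ B ≤ R, ∃ C ≤ A,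
      T = B.map ι + C.map (fun a => e + ι a) := by
    intro T hT
    have key : ∀ (U V T : Multiset G), T ≤ U + V → ∃ T1 ≤ U, ∃ T2 ≤ V, T = T1 + T2 := by
      intro U V T hT
      refine ⟨T ∩ U, Multiset.inter_le_right, T - U, ?_, ?_⟩
      · rw [tsub_le_iff_left]; exact hT
      · rw [add_comm, Multiset.sub_add_inter]
    have lift : ∀ (f : H → G) (U : Multiset H) (T : Multiset G), T ≤ U.map f →
        ∃ B ≤ U, T = B.map f := by
      intro f U T hT
      induction U using Quotient.inductionOn
      induction T using Quotient.inductionOn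
      rename_i l t
      simp only [Multiset.quot_mk_to_coe, Multiset.map_coe, Multiset.coe_le] at hT ⊢
      obtain ⟨t', ht', hs⟩ := hT
      obtain ⟨l', hl', rfl⟩ := List.sublist_map_iff.1 hs
      refine ⟨(l' : Multiset H), Multiset.coe_le.2 hl'.subperm, ?_⟩
      rw [Multiset.map_coe]
      exact (Multiset.coe_eq_coe.2 ht').symm
    obtain ⟨T1, h1, T2, h2, rfl⟩ := key _ _ _ hT
    obtain ⟨B, hB, rfl⟩ := lift _ _ _ h1
    obtain ⟨C, hC, rfl⟩ := lift _ _ _ h2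
    exact ⟨B, hB, C, hC, rfl⟩
  refine ⟨?_, ?_, ?_⟩
  · intro hz
    have := congrArg card hz
    simp at this
    have := this.2
    subst this
    simp at hA
    omega
  · rw [Multiset.sum_add, sumA, sumR, hA, hme, hsum, zero_add, ← _root_.map_add, add_comm]
    rw [Multiset.sum_cons] at h0
    rw [h0, _root_.map_zero]
  · intro T hT hT0 hTS hz
    obtain ⟨B, hB, C, hC, rfl⟩ := split T hT
    rw [Multiset.sum_add, sumA, sumR] at hz
    have hp := congrArg π hz
    simp only [_root_.map_add, hπ, _root_.map_nsmul, he, _root_.map_zero, zero_add, add_zero, nsmul_eq_mul,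
      mul_one] at hp
    rw [ZMod.natCast_eq_zero_iff] at hp
    have hcC := Multiset.card_le_card hC
    rcases Nat.eq_zero_or_pos (card C) with hc | hc
    · rw [Multiset.card_eq_zero] at hc
      subst hc
      simp only [Multiset.card_zero, zero_smul, Multiset.sum_zero, _root_.map_zero, add_zero,
        Multiset.map_zero] at hz hT0
      refine hmin B (hB.trans (Multiset.le_cons_self _ _)) (by rintro rfl; simp at hT0) ?_ ?_
      · rintro rfl
        have := Multiset.card_le_card hB
        simp at this
      · exact hι (by rw [hz, _root_.map_zero])
    · have := Nat.le_of_dvd hc hp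
      have hCA : C = A := Multiset.eq_of_le_of_card_le hC (by omega)
      subst hCA
      rw [hA, hme, hsum, zero_add, ← _root_.map_add] at hz
      have hz' : B.sum + h = 0 := hι (by rw [hz, _root_.map_zero])
      refine hmin (h ::ₘ B) (Multiset.cons_le_cons _ hB) (Multiset.cons_ne_zero) ?_ ?_
      · intro hh
        rw [Multiset.cons_inj_right] at hh
        subst hh
        exact hTS rfl
      · rw [Multiset.sum_cons, add_comm, hz']

lemma replace_dedup {H G : Type} [AddCommGroup H] [AddCommGroup G] [DecidableEq H]
    [DecidableEq G] (m : ℕ) (hm : 1 < m)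
    (ι : H →+ G) (hι : Function.Injective ι) (π : G →+ ZMod m) (hπ : ∀ x, π (ι x) = 0)
    (e : G) (he : π e = 1) (R A : Multiset H) :
    card (R.map ι + A.map (fun a => e + ι a)).dedup = card R.dedup + card A.dedup := by
  have hd : Disjoint (R.map ι) (A.map (fun a => e + ι a)) := by
    rw [Multiset.disjoint_left]
    intro x hx hy
    obtain ⟨a, -, rfl⟩ := Multiset.mem_map.1 hx
    obtain ⟨b, -, hb⟩ := Multiset.mem_map.1 hy
    have h10 := congrArg π hb
    rw [_root_.map_add, hπ, hπ, he, add_zero] at h10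
    have : Fact (1 < m) := ⟨hm⟩
    exact one_ne_zero h10
  rw [Multiset.Disjoint.dedup_add hd, Multiset.card_add,
    Multiset.dedup_map_of_injective hι,
    Multiset.dedup_map_of_injective (fun a b hab => hι (add_left_cancel hab))]
  simp

/-- choose the term to be removed. -/
lemma choose_term {H : Type} [DecidableEq H] (S : Multiset H) (hS : S ≠ 0) (b : ℕ)
    (hb : card S ≤ card S.dedup + b) :
    ∃ h R, S = h ::ₘ R ∧ card R ≤ card R.dedup + (b - 1) := by
  by_cases hn : S.Nodup
  · obtain ⟨h, hh⟩ := Multiset.exists_mem_of_ne_zero hS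
    obtain ⟨R, rfl⟩ := Multiset.exists_cons_of_mem hh
    refine ⟨h, R, rfl, ?_⟩
    rw [(Multiset.nodup_cons.1 hn).2.dedup]
    omega
  · rw [Multiset.nodup_iff_le] at hn
    push Not at hn
    obtain ⟨h, hh⟩ := hn
    obtain ⟨R, rfl⟩ := Multiset.le_iff_exists_add.1 hh
    refine ⟨h, h ::ₘ R, by simp, ?_⟩
    have h1 : (h ::ₘ h ::ₘ 0 + R) = h ::ₘ (h ::ₘ R) := by simp
    rw [h1, Multiset.dedup_cons_of_mem (Multiset.mem_cons_self _ _)] at hb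
    simp only [Multiset.card_cons] at hb ⊢
    have h2 : 0 < card (h ::ₘ R).dedup := Multiset.card_pos.2 (by
      intro h3
      have : h ∈ (h ::ₘ R).dedup := by simp
      rw [h3] at this
      simp at this)
    have h3 : card (h ::ₘ R).dedup ≤ card R + 1 := by
      have := Multiset.card_le_card (Multiset.dedup_le (h ::ₘ R))
      simpa using this
    omega

lemma main_step (r : ℕ) (n : Fin (r + 1) → ℕ) (hn1 : ∀ i, 1 < n i)
    [DecidableEq (∀ i : Fin (r+1), ZMod (n i))] [DecidableEq (∀ i : Fin r, ZMod (n i.succ))]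
    (h : ∀ i : Fin r, ZMod (n i.succ)) (R A : Multiset (∀ i : Fin r, ZMod (n i.succ)))
    (hS : IsMinimalZeroSum (h ::ₘ R)) (hA : card A = n 0) (hsum : A.sum = h) :
    ∃ S : Multiset (∀ i : Fin (r+1), ZMod (n i)), IsMinimalZeroSum S ∧
      card S = card R + n 0 ∧ card S.dedup = card R.dedup + card A.dedup := by
  let ι : (∀ i : Fin r, ZMod (n i.succ)) →+ (∀ i : Fin (r+1), ZMod (n i)) :=
    { toFun := fun x => Fin.cons (α := fun i => ZMod (n i)) 0 x
      map_zero' := by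
        funext i; refine Fin.cases ?_ (fun j => ?_) i <;> simp
      map_add' := by
        intro x y
        funext i; refine Fin.cases ?_ (fun j => ?_) i <;> simp }
  have hι : Function.Injective ι := by
    intro x y hxy
    funext j
    have := congrFun hxy j.succ
    simpa [ι] using this
  let π : (∀ i : Fin (r+1), ZMod (n i)) →+ ZMod (n 0) :=
    Pi.evalAddMonoidHom (fun i => ZMod (n i)) 0
  have hπ : ∀ x, π (ι x) = 0 := fun x => by simp [π, ι]
  let e : ∀ i : Fin (r+1), ZMod (n i) := Pi.single 0 1
  have he : π e = 1 := by simp [π, e]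
  have hme : n 0 • e = 0 := by
    simp only [e]
    rw [← Pi.single_smul]
    simp
  refine ⟨_, replace_minimal (n 0) (by have := hn1 0; omega) ι hι π hπ e he hme h R A hS hA hsum,
    ?_, replace_dedup (n 0) (hn1 0) ι hι π hπ e he R A⟩
  simp [hA]

/-- the multiples `j • f`, `j < m - 1`, together with the complementary term. -/
lemma exists_A {H : Type} [AddCommGroup H] [DecidableEq H] (m : ℕ) (hm : 1 < m) (h f : H)
    (hf : ∀ i < m - 1, ∀ j < m - 1, i • f = j • f → i = j) :
    ∃ A : Multiset H, card A = m ∧ A.sum = h ∧ m - 1 ≤ card A.dedup ∧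
      ((∀ c : ℤ, h ≠ c • f) → card A.dedup = m) := by
  set B : Multiset H := (Multiset.range (m-1)).map (fun j => j • f) with hB
  have hcB : card B = m - 1 := by simp [hB]
  have hnd : B.Nodup := by
    refine Multiset.Nodup.map_on ?_ (Multiset.nodup_range _)
    intro x hx y hy hxy
    exact hf x (Multiset.mem_range.1 hx) y (Multiset.mem_range.1 hy) hxy
  have hBs : ∃ c : ℤ, B.sum = c • f := by
    have : B.sum ∈ AddSubgroup.zmultiples f := by
      refine AddSubgroup.multiset_sum_mem _ _ fun x hx => ?_
      obtain ⟨j, -, rfl⟩ := Multiset.mem_map.1 hx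
      exact AddSubgroup.nsmul_mem_zmultiples f j
    obtain ⟨c, hc⟩ := AddSubgroup.mem_zmultiples_iff.1 this
    exact ⟨c, hc.symm⟩
  refine ⟨(h - B.sum) ::ₘ B, by simp [hcB]; omega, by simp, ?_, ?_⟩
  · rw [← hcB]
    nth_rw 1 [← hnd.dedup]
    exact Multiset.card_le_card (Multiset.le_dedup.2
      ⟨(Multiset.dedup_le _).trans (Multiset.le_cons_self _ _), Multiset.nodup_dedup _⟩)
  · intro hc
    have : (h - B.sum) ∉ B := by
      intro hx
      obtain ⟨j, -, hj⟩ := Multiset.mem_map.1 hx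
      obtain ⟨c, hc'⟩ := hBs
      apply hc (j + c)
      rw [add_smul, ← hc', natCast_zsmul, hj]
      abel
    rw [(Multiset.nodup_cons.2 ⟨this, hnd⟩).dedup]
    simp [hcB]; omega

lemma single_inj (r : ℕ) (n : Fin r → ℕ) (j : Fin r) (m : ℕ) (hm : m ≤ n j)
    (a b : ℕ) (ha : a < m) (hb : b < m)
    (hab : a • (Pi.single j 1 : ∀ i : Fin r, ZMod (n i)) = b • Pi.single j 1) : a = b := by
  have := congrFun hab j
  simp only [Pi.smul_apply, Pi.single_eq_same, nsmul_eq_mul, mul_one] at this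
  rw [ZMod.natCast_eq_natCast_iff'] at this
  rwa [Nat.mod_eq_of_lt (by omega), Nat.mod_eq_of_lt (by omega)] at this

open Classical in
lemma exists_seq (N : ℕ) : ∀ (r : ℕ) (n : Fin (r + 1) → ℕ), (∀ i, 1 < n i) →
    (∀ i j, i ≤ j → n i ≤ n j) → (∀ i, n i ≤ N) →
    ∃ S : Multiset (∀ i : Fin (r+1), ZMod (n i)), IsMinimalZeroSum S ∧
      card S = 1 + ∑ i, (n i - 1) ∧
      card S ≤ card S.dedup + (if r = 0 then N - 1 else N - r) := by
  intro r
  induction r with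
  | zero =>
    intro n hn1 hmono hN
    obtain ⟨S, hS, hc, hd⟩ := main_step 0 n hn1 0 0 (Multiset.replicate (n 0) 0)
      ⟨by simp, by simp, by
        intro T hT h0 h1
        exfalso
        rcases (Multiset.le_singleton).1 hT with h | h
        · exact h0 h
        · exact h1 h⟩ (by simp) (by simp)
    have h1 := hn1 0
    have h2 := hN 0
    have h3 : (Multiset.replicate (n 0) (0 : ∀ i : Fin 0, ZMod (n i.succ))).dedup ≠ 0 := by
      intro h
      rw [Multiset.dedup_eq_zero] at h
      have := congrArg card h
      simp at this
      omega
    have h4 := Multiset.card_pos.2 h3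
    refine ⟨S, hS, ?_, ?_⟩
    · simp [hc]; omega
    · rw [hc, hd]
      simp only [Multiset.card_zero, Multiset.dedup_zero, if_true]
      omega
  | succ r ih =>
    intro n hn1 hmono hN
    obtain ⟨S, hS, hc, hd⟩ := ih (fun i => n i.succ) (fun i => hn1 _)
      (fun i j hij => hmono _ _ (Fin.succ_le_succ_iff.2 hij)) (fun i => hN _)
    obtain ⟨h, R, rfl, hR⟩ := choose_term S hS.1 _ hd
    have h1 := hn1 0
    have h2 := hN 0
    have hh : h ≠ 0 := by
      have h5 := hS.2.2 {h} (by simp) (by simp) (by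
        intro h6
        have h7 := congrArg card h6
        rw [hc, Fin.sum_univ_succ, Multiset.card_singleton] at h7
        have h8 := hn1 (Fin.succ 0)
        omega)
      simpa using h5
    have hlen : card R + n 0 = 1 + ∑ i, (n i - 1) := by
      rw [Fin.sum_univ_succ]
      rw [Multiset.card_cons] at hc
      omega
    obtain ⟨i, hi⟩ := Function.ne_iff.1 hh
    have hsingle : ∀ j : Fin (r+1), ∀ a < n 0 - 1, ∀ b < n 0 - 1,
        a • (Pi.single j 1 : ∀ i : Fin (r+1), ZMod (n i.succ)) = b • Pi.single j 1 → a = b := by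
      intro j a ha b hb hab
      have := hmono 0 j.succ (Fin.zero_le _)
      exact single_inj (r+1) (fun i => n i.succ) j (n 0 - 1) (by omega) a b ha hb hab
    rcases Nat.eq_zero_or_pos r with hr | hr
    · subst hr
      obtain ⟨A, hA, hsum, hAd, -⟩ := exists_A (n 0) h1 h _ (hsingle 0)
      obtain ⟨S', hS', hc', hd'⟩ := main_step _ n hn1 h R A hS hA hsum
      refine ⟨S', hS', by rw [hc', hlen], ?_⟩
      simp at hR ⊢
      omega
    · have : ∃ j : Fin (r+1), j ≠ i := by
        have : Nontrivial (Fin (r+1)) := Fin.nontrivial_iff_two_le.2 (by omega)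
        exact exists_ne i
      obtain ⟨j, hj⟩ := this
      obtain ⟨A, hA, hsum, -, hAd⟩ := exists_A (n 0) h1 h _ (hsingle j)
      have hAd := hAd (by
        intro c hce
        apply hi
        rw [hce]
        simp [Pi.single_eq_of_ne hj.symm])
      obtain ⟨S', hS', hc', hd'⟩ := main_step _ n hn1 h R A hS hA hsum
      refine ⟨S', hS', by rw [hc', hlen], ?_⟩
      rw [if_neg (by omega)] at hR ⊢
      omega

open Classical in
lemma exists_final (r : ℕ) (n : Fin r → ℕ) (hn1 : ∀ i, 1 < n i)
    (hdvd : ∀ i j : Fin r, i ≤ j → n i ∣ n j) (k : ℕ)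
    (hrk : AddMonoid.exponent (∀ i : Fin r, ZMod (n i)) + 1 ≤ r + k) :
    ∃ S : Multiset (∀ i : Fin r, ZMod (n i)), IsMinimalZeroSum S ∧ cmul 1 S ≤ k ∧
      card S = 1 + ∑ i, (n i - 1) := by
  have hexp : ∀ i, n i ≤ AddMonoid.exponent (∀ i : Fin r, ZMod (n i)) := by
    intro i
    have : ∀ i, NeZero (n i) := fun i => ⟨by have := hn1 i; omega⟩
    refine Nat.le_of_dvd (Nat.pos_of_ne_zero AddMonoid.exponent_ne_zero_of_finite) ?_
    rw [← ZMod.natCast_eq_zero_iff]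
    have := congrFun (AddMonoid.exponent_nsmul_eq_zero
      (Pi.single i 1 : ∀ i : Fin r, ZMod (n i))) i
    simpa using this
  cases r with
  | zero =>
    refine ⟨{0}, ⟨by simp, by simp, ?_⟩, cmul_one_le _ _ (by simp), by simp⟩
    intro T hT h0 h1
    exfalso
    rcases (Multiset.le_singleton).1 hT with h | h
    · exact h0 h
    · exact h1 h
  | succ r =>
    obtain ⟨S, hS, hc, hd⟩ := exists_seq _ r n hn1
      (fun i j hij => Nat.le_of_dvd (by have := hn1 j; omega) (hdvd i j hij)) hexp
    refine ⟨S, hS, cmul_one_le S k (hd.trans ?_), hc⟩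
    split_ifs <;> omega

/-- Corollary: let `G ≅ C_{n_1} ⊕ … ⊕ C_{n_r}` (invariant factor decomposition,
so `1 < n_1 ∣ … ∣ n_r`) be a finite abelian group with `D(G) = D*(G)` and let
`k ∈ ℕ₀`. If `r(G) ≥ exp(G) + 1 − k`, then `SD_k(G) = D*(G)`. -/
theorem SDk_eq_Dstar_of_large_rank (r : ℕ) (n : Fin r → ℕ) (hn1 : ∀ i, 1 < n i)
    (hdvd : ∀ i j : Fin r, i ≤ j → n i ∣ n j) (k : ℕ)
    (hD : DavenportD (∀ i : Fin r, ZMod (n i)) = 1 + ∑ i, (n i - 1))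
    (hrk : AddMonoid.exponent (∀ i : Fin r, ZMod (n i)) + 1 ≤ r + k) :
    SDk (∀ i : Fin r, ZMod (n i)) k = 1 + ∑ i, (n i - 1) := by 
  obtain ⟨S, hS, hk, hc⟩ := exists_final r n hn1 hdvd k hrk
  have hb : BddAbove {m | ∃ S : Multiset (∀ i : Fin r, ZMod (n i)),
      IsMinimalZeroSum S ∧ Multiset.card S = m} := by
    by_contra hb
    have h0 : DavenportD (∀ i : Fin r, ZMod (n i)) = 0 := Nat.sSup_of_not_bddAbove hb
    omega
  have hub : ∀ m ∈ {m | ∃ S : Multiset (∀ i : Fin r, ZMod (n i)),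
      IsMinimalZeroSum S ∧ cmul 1 S ≤ k ∧ Multiset.card S = m}, m ≤ 1 + ∑ i, (n i - 1) := by
    rintro m ⟨T, hT, -, hm⟩
    rw [← hD]
    exact le_csSup hb ⟨T, hT, hm⟩
  unfold SDk SDpair
  exact le_antisymm (csSup_le ⟨_, S, hS, hk, hc⟩ hub) (le_csSup ⟨_, hub⟩ ⟨S, hS, hk, hc⟩)
end

section
/- For every k ∈ ℕ₀ and every d ∈ ℕ, there exists a finite abelian group G such that SD_k(G) ≥ D*(G) + d. -/
open Multiset

/-- First components (as 4-bit numbers) of the ten-term zero-sumfree set in `C_2^4 ⊕ C_6`. -/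
def vecV : Fin 10 → ℕ := ![13, 4, 11, 4, 1, 2, 12, 11, 14, 3]

/-- Components in `C_6`. -/
def vecC : Fin 10 → ℕ := ![1, 1, 4, 4, 1, 4, 1, 1, 4, 4]

def bitB (j : Fin 10) (c : ℕ) : ℕ := (vecV j / 2 ^ c) % 2

theorem core_bool : ∀ a b c d e f g h i j : Bool,
    (let y : Fin 10 → ℕ :=
      ![a.toNat, b.toNat, c.toNat, d.toNat, e.toNat, f.toNat, g.toNat, h.toNat, i.toNat, j.toNat]
    (∑ k, y k * bitB k 0) % 2 = 0 ∧ (∑ k, y k * bitB k 1) % 2 = 0 ∧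
    (∑ k, y k * bitB k 2) % 2 = 0 ∧ (∑ k, y k * bitB k 3) % 2 = 0 ∧
    (∑ k, y k * vecC k) % 6 = 0) →
    (a || b || c || d || e || f || g || h || i || j) = false := by
  simp only [Fin.sum_univ_succ]
  decide +kernel

theorem core_finset (A : Finset (Fin 10)) (hB : ∀ c < 4, 2 ∣ ∑ j ∈ A, bitB j c)
    (hC : 6 ∣ ∑ j ∈ A, vecC j) : A = ∅ := by
  have key : ∀ f : Fin 10 → ℕ, ∑ j ∈ A, f j = ∑ k, (decide (k ∈ A)).toNat * f k := by
    intro f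
    rw [← Finset.sum_filter_add_sum_filter_not Finset.univ (· ∈ A)]
    have h1 : ∑ k with k ∉ A, (decide (k ∈ A)).toNat * f k = 0 := by
      apply Finset.sum_eq_zero
      intro k hk
      simp at hk
      simp [hk]
    rw [h1, add_zero]
    have : (Finset.univ.filter (· ∈ A)) = A := by ext; simp
    rw [this]
    apply Finset.sum_congr rfl
    intro k hk
    simp [hk]
  have h := core_bool (decide ((0 : Fin 10) ∈ A)) (decide ((1 : Fin 10) ∈ A))
    (decide ((2 : Fin 10) ∈ A)) (decide ((3 : Fin 10) ∈ A)) (decide ((4 : Fin 10) ∈ A))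
    (decide ((5 : Fin 10) ∈ A)) (decide ((6 : Fin 10) ∈ A)) (decide ((7 : Fin 10) ∈ A))
    (decide ((8 : Fin 10) ∈ A)) (decide ((9 : Fin 10) ∈ A))
  have hy : (![(decide ((0 : Fin 10) ∈ A)).toNat, (decide ((1 : Fin 10) ∈ A)).toNat,
      (decide ((2 : Fin 10) ∈ A)).toNat, (decide ((3 : Fin 10) ∈ A)).toNat,
      (decide ((4 : Fin 10) ∈ A)).toNat, (decide ((5 : Fin 10) ∈ A)).toNat,
      (decide ((6 : Fin 10) ∈ A)).toNat, (decide ((7 : Fin 10) ∈ A)).toNat,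
      (decide ((8 : Fin 10) ∈ A)).toNat, (decide ((9 : Fin 10) ∈ A)).toNat] : Fin 10 → ℕ)
      = fun k => (decide (k ∈ A)).toNat := by
    funext k
    fin_cases k <;> rfl
  rw [hy] at h
  simp only [← key] at h
  have h' := h ⟨Nat.mod_eq_zero_of_dvd (hB 0 (by norm_num)),
    Nat.mod_eq_zero_of_dvd (hB 1 (by norm_num)), Nat.mod_eq_zero_of_dvd (hB 2 (by norm_num)),
    Nat.mod_eq_zero_of_dvd (hB 3 (by norm_num)), Nat.mod_eq_zero_of_dvd hC⟩
  simp only [Bool.or_eq_false_iff, decide_eq_false_iff_not] at h'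
  ext k
  simp only [Finset.notMem_empty, iff_false]
  fin_cases k <;> simp <;> tauto

theorem core_inj : ∀ j j' : Fin 10, vecC j % 6 = vecC j' % 6 →
    (∀ c < 4, bitB j c % 2 = bitB j' c % 2) → j = j' := by decide +kernel

theorem vecC_ne : ∀ j : Fin 10, vecC j % 6 ≠ 0 := by decide +kernel

theorem card_le_cmul {G : Type*} [AddCommMonoid G] [Fintype G] (S : Multiset G) :
    Multiset.card S ≤ cmul 1 S + Fintype.card G := by
  classical
  have h1 : Multiset.card S = ∑ g ∈ S.toFinset, S.count g := (Multiset.toFinset_sum_count_eq S).symm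
  have h2 : cmul 1 S = ∑ g ∈ S.toFinset, (S.count g - 1) := by
    unfold cmul
    congr!
  rw [h1, h2]
  calc ∑ g ∈ S.toFinset, S.count g ≤ ∑ g ∈ S.toFinset, ((S.count g - 1) + 1) :=
        Finset.sum_le_sum (fun g _ => by omega)
    _ = ∑ g ∈ S.toFinset, (S.count g - 1) + S.toFinset.card := by
        rw [Finset.sum_add_distrib]; simp
    _ ≤ _ := by gcongr; exact Finset.card_le_univ _

theorem SDk_ge {G : Type*} [AddCommGroup G] [Finite G] (k : ℕ) (F : Finset G)
    (hF : ∀ T ⊆ F, T.Nonempty → ∑ g ∈ T, g ≠ 0) (hg : -(∑ g ∈ F, g) ∉ F) :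
    F.card + 1 ≤ SDk G k := by
  classical
  have := Fintype.ofFinite G
  unfold SDk SDpair
  apply le_csSup
  · refine ⟨k + Fintype.card G, ?_⟩
    rintro m ⟨S, -, hS, rfl⟩
    have := card_le_cmul S
    omega
  · set g0 := -(∑ g ∈ F, g) with hg0
    refine ⟨(insert g0 F).val, ⟨?_, ?_, ?_⟩, ?_, ?_⟩
    · intro h0
      exact Finset.insert_ne_empty g0 F (Finset.val_eq_zero.mp h0)
    · have : ((insert g0 F).val).sum = ∑ g ∈ insert g0 F, g := by simp [Finset.sum]
      rw [this, Finset.sum_insert hg]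
      simp [hg0]
    · intro T hT hT0 hTS hsum
      have hnd : T.Nodup := Multiset.nodup_of_le hT (insert g0 F).nodup
      obtain ⟨T', rfl⟩ : ∃ T' : Finset G, T'.val = T := ⟨⟨T, hnd⟩, rfl⟩
      have hsub : T' ⊆ insert g0 F := Finset.val_le_iff.mp hT
      have hs : ∑ g ∈ T', g = 0 := by
        rw [← hsum]
        unfold Finset.sum
        rw [Multiset.map_id']
      have hne : T'.Nonempty := by
        rw [Finset.nonempty_iff_ne_empty]
        rintro rfl
        exact hT0 rfl
      by_cases hmem : g0 ∈ T'
      · have hs2 : ∑ g ∈ (insert g0 F) \ T', g = 0 := by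
          have := Finset.sum_sdiff (f := fun g : G => g) hsub
          rw [hs, add_zero, Finset.sum_insert hg] at this
          rw [this]
          simp [hg0]
        refine hF _ ?_ ?_ hs2
        · intro y hy
          rw [Finset.mem_sdiff, Finset.mem_insert] at hy
          rcases hy with ⟨rfl | h, h2⟩
          · exact absurd hmem h2
          · exact h
        · rw [Finset.sdiff_nonempty]
          intro h
          exact hTS (congrArg Finset.val (Finset.Subset.antisymm hsub h))
      · refine hF T' ?_ hne hs
        intro y hy
        rcases Finset.mem_insert.mp (hsub hy) with rfl | h
        · exact absurd hy hmem
        · exact h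
    · have : cmul 1 (insert g0 F).val = 0 := by
        unfold cmul
        apply Finset.sum_eq_zero
        intro g _
        have := Multiset.nodup_iff_count_le_one.mp (insert g0 F).nodup g
        simp only [tsub_eq_zero_iff_le]
        convert this
      omega
    · exact Finset.card_insert_of_notMem hg

/-- Integer coordinates of the element with block `i` and index `j`. -/
def wt (m : ℕ) (p : Fin m × Fin 10) (s : ℕ) : ℕ :=
  if s < 4 * m then (if s / 4 = p.1 then bitB p.2 (s % 4) else 0)
  else if s - 4 * m = p.1 then vecC p.2 else 0

def modn (m : ℕ) (s : Fin (4 * m + m)) : ℕ := if s.val < 4 * m then 2 else 6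

def elt (m : ℕ) (p : Fin m × Fin 10) : ∀ s : Fin (4 * m + m), ZMod (modn m s) :=
  fun s => (wt m p s : ℕ)

theorem wt_low (m : ℕ) (p : Fin m × Fin 10) (i : Fin m) (c : ℕ) (hc : c < 4) :
    wt m p (4 * i + c) = if i = p.1 then bitB p.2 c else 0 := by
  unfold wt
  have h1 : 4 * (i : ℕ) + c < 4 * m := by omega
  have h2 : (4 * (i : ℕ) + c) / 4 = i := by omega
  have h3 : (4 * (i : ℕ) + c) % 4 = c := by omega
  simp [h1, h2, h3, Fin.ext_iff]

theorem wt_high (m : ℕ) (p : Fin m × Fin 10) (i : Fin m) :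
    wt m p (4 * m + i) = if i = p.1 then vecC p.2 else 0 := by
  unfold wt
  simp [Fin.ext_iff]

theorem sum_block (m : ℕ) (T : Finset (Fin m × Fin 10)) (i : Fin m) (f : Fin 10 → ℕ) :
    ∑ p ∈ T, (if i = p.1 then f p.2 else 0) =
      ∑ j ∈ Finset.univ.filter (fun j => (i, j) ∈ T), f j := by
  rw [← Finset.sum_filter]
  symm
  apply Finset.sum_bij (fun j _ => (i, j))
  · intro j hj
    simpa using hj
  · intro a _ b _ h
    simpa using h
  · rintro ⟨i', j⟩ h
    simp only [Finset.mem_filter] at h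
    obtain ⟨h, rfl⟩ := h
    exact ⟨j, by simpa using h, rfl⟩
  · intro j _
    rfl

/-- If the sum of a subfamily vanishes on block `i`, the family does not meet block `i`. -/
theorem block_empty (m : ℕ) (T : Finset (Fin m × Fin 10)) (i : Fin m)
    (h : ∀ s : Fin (4 * m + m), (s.val < 4 * m → s.val / 4 = i) →
      (¬ s.val < 4 * m → s.val - 4 * m = i) → (∑ p ∈ T, elt m p) s = 0) :
    ∀ j, (i, j) ∉ T := by
  have hd : ∀ s : Fin (4 * m + m), (s.val < 4 * m → s.val / 4 = i) →
      (¬ s.val < 4 * m → s.val - 4 * m = i) → modn m s ∣ ∑ p ∈ T, wt m p s := by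
    intro s h1 h2
    have := h s h1 h2
    rw [Finset.sum_apply] at this
    simp only [elt] at this
    rw [← Nat.cast_sum] at this
    exact (ZMod.natCast_eq_zero_iff _ _).mp this
  have hA := core_finset (Finset.univ.filter (fun j => (i, j) ∈ T)) ?_ ?_
  · intro j hj
    have : j ∈ Finset.univ.filter (fun j => (i, j) ∈ T) := by simpa using hj
    rw [hA] at this
    simp at this
  · intro c hc
    have := hd ⟨4 * i + c, by omega⟩ (fun _ => by simp only; omega)
      (fun h => by simp only at h ⊢; omega)
    simp only [wt_low m _ i c hc] at this
    rw [sum_block m T i (fun j => bitB j c)] at this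
    have h2 : 4 * (i : ℕ) + c < 4 * m := by omega
    simpa [modn, h2] using this
  · have := hd ⟨4 * m + i, by omega⟩ (fun h => by simp only at h ⊢; omega)
      (fun _ => by simp only; omega)
    simp only [wt_high m _ i] at this
    rw [sum_block m T i (fun j => vecC j)] at this
    simpa [modn] using this

theorem elt_inj (m : ℕ) : Function.Injective (elt m) := by
  rintro ⟨i, j⟩ ⟨i', j'⟩ h
  have hs : ∀ s : Fin (4 * m + m), wt m (i, j) s % modn m s = wt m (i', j') s % modn m s := by
    intro s
    have := congrFun h s
    simp only [elt] at this
    exact (ZMod.natCast_eq_natCast_iff' _ _ _).mp this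
  have hh := hs ⟨4 * m + i, by omega⟩
  simp only [wt_high] at hh
  have hi : i = i' := by
    by_contra hne
    simp [modn, hne] at hh
    exact vecC_ne j (by omega)
  subst hi
  simp [modn] at hh
  have : j = j' := by
    apply core_inj j j' hh
    intro c hc
    have h1 := hs ⟨4 * i + c, by omega⟩
    have h2 : 4 * (i : ℕ) + c < 4 * m := by omega
    simp only [wt_low m _ i c hc] at h1
    simpa [modn, h2] using h1
  rw [this]

/-- Corollary: for every `k ∈ ℕ₀` and `d ∈ ℕ`, there exists a finite abelian
group `G` (given by its invariant factor decomposition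
`G ≅ C_{n_1} ⊕ … ⊕ C_{n_r}` with `1 < n_1 ∣ … ∣ n_r`) such that
`SD_k(G) ≥ D*(G) + d`. -/
theorem exists_SDk_ge_Dstar_add (k d : ℕ) (hd : 1 ≤ d) :
    ∃ (r : ℕ) (n : Fin r → ℕ), (∀ i, 1 < n i) ∧
      (∀ i j : Fin r, i ≤ j → n i ∣ n j) ∧
      1 + (∑ i, (n i - 1)) + d ≤ SDk (∀ i : Fin r, ZMod (n i)) k := by
  classical
  obtain ⟨m, hm⟩ : ∃ m, m = d + 1 := ⟨_, rfl⟩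
  have hlt : ∀ i, 1 < modn m i := by
    intro i
    unfold modn
    split_ifs <;> norm_num
  refine ⟨4 * m + m, modn m, hlt, ?_, ?_⟩
  · intro i j hij
    have : i.val ≤ j.val := hij
    unfold modn
    split_ifs <;> omega
  have hsum : ∑ i, (modn m i - 1) = 9 * m := by
    rw [Fin.sum_univ_add]
    simp [modn]
    omega
  have : ∀ i, NeZero (modn m i) := fun i => ⟨by have := hlt i; omega⟩
  have hinj := elt_inj m
  have key := SDk_ge (G := ∀ i, ZMod (modn m i)) k (Finset.univ.image (elt m)) ?_ ?_
  · rw [Finset.card_image_of_injective _ hinj] at key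
    simp at key
    omega
  · intro T hT hne h0
    obtain ⟨U, -, rfl⟩ := Finset.subset_image_iff.mp hT
    rw [Finset.sum_image (fun a _ b _ h => hinj h)] at h0
    obtain ⟨⟨i, j⟩, hij⟩ := Finset.image_nonempty.mp hne
    exact block_empty m U i (fun s _ _ => by rw [h0]; rfl) j hij
  · rw [Finset.sum_image (fun a _ b _ h => hinj h)]
    intro h
    obtain ⟨⟨i, j⟩, -, hp⟩ := Finset.mem_image.mp h
    obtain ⟨i', hi'⟩ : ∃ i' : Fin m, i' ≠ i := by
      by_cases h0 : i.val = 0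
      · exact ⟨⟨1, by omega⟩, by simp [Fin.ext_iff, h0]⟩
      · exact ⟨⟨0, by omega⟩, by rw [Ne, Fin.ext_iff]; simp; omega⟩
    refine block_empty m Finset.univ i' ?_ 0 (Finset.mem_univ _)
    intro s h1 h2
    have h3 : ∑ p, elt m p = - elt m (i, j) := by rw [hp, neg_neg]
    have hv : i'.val ≠ i.val := fun h => hi' (Fin.ext h)
    rw [h3]
    simp only [Pi.neg_apply, elt, neg_eq_zero]
    have : wt m (i, j) s = 0 := by
      unfold wt
      by_cases hlow : s.val < 4 * m
      · have := h1 hlow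
        simp [hlow, this, hv]
      · have := h2 hlow
        simp [hlow, this, hv]
    rw [this]
    simp
end

section
/- Let p be a prime with p > 6000. Then SD(C_p ⊕ C_p) = Ol(C_p ⊕ C_p) − 1. -/
open Multiset

open Finset MvPolynomial in
theorem ddh_coeff_lower {K : Type*} [Field K] {n : ℕ} (C₀ : List K) :
    ∀ (V : MvPolynomial (Fin n) K) (D : ℕ) (t : Fin n →₀ ℕ), V.totalDegree ≤ D →
      t.degree = D + C₀.length →
      coeff t (V * (C₀.map (fun c => (∑ i, X i) - C c)).prod) =
        coeff t (V * (∑ i, X i) ^ C₀.length) := by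
  induction C₀ with
  | nil => intro V D t _ _; simp
  | cons c l ih =>
    intro V D t hV ht
    have hS : (∑ i, X i : MvPolynomial (Fin n) K).totalDegree ≤ 1 := by
      refine totalDegree_finsetSum_le ?_
      intro i _
      exact (totalDegree_X i).le
    have hS2 : ((∑ i, X i : MvPolynomial (Fin n) K) - C c).totalDegree ≤ 1 := by
      refine (totalDegree_sub _ _).trans ?_
      simp [hS]
    simp only [List.map_cons, List.prod_cons, List.length_cons] at ht ⊢
    rw [← mul_assoc, ih (V * ((∑ i, X i) - C c)) (D + 1) t
      ((totalDegree_mul _ _).trans (by omega)) (by omega)]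
    have : V * ((∑ i, X i) - C c) * (∑ i, X i) ^ l.length =
      V * (∑ i, X i) ^ (l.length + 1) - C c * (V * (∑ i, X i) ^ l.length) := by ring
    rw [this, coeff_sub, coeff_C_mul]
    have h0 : coeff t (V * (∑ i, X i) ^ l.length) = 0 := by
      apply coeff_eq_zero_of_totalDegree_lt
      have h1 : (V * (∑ i, X i) ^ l.length).totalDegree ≤ D + l.length := by
        refine (totalDegree_mul _ _).trans ?_
        have := totalDegree_pow (∑ i, X i : MvPolynomial (Fin n) K) l.length
        have h3 : l.length * (∑ i, X i : MvPolynomial (Fin n) K).totalDegree ≤ l.length * 1 :=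
          Nat.mul_le_mul_left _ hS
        omega
      have h2 : ∑ i ∈ t.support, t i = t.degree := rfl
      omega
    rw [h0]; simp

open Finset MvPolynomial in
theorem ddh_term {n : ℕ} (c : Fin n → ℕ) (M : ℕ)
    (hM : ∑ i, c i = M + ∑ i : Fin n, (i : ℕ)) (σ : Equiv.Perm (Fin n)) :
    (∏ i, (c i).factorial) *
      (if (Finsupp.equivFunOnFinite.symm (fun j => ((σ.symm j : Fin n) : ℕ))) ≤
          (Finsupp.equivFunOnFinite.symm c) then
        (Finsupp.equivFunOnFinite.symm c -
          Finsupp.equivFunOnFinite.symm (fun j => ((σ.symm j : Fin n) : ℕ))).multinomial else 0)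
      = M.factorial * ∏ i, (c (σ i)).descFactorial i := by
  have hprod : ∏ i, (c (σ i)).descFactorial i = ∏ j, (c j).descFactorial (σ.symm j) := by
    rw [← Equiv.prod_comp σ (fun j => (c j).descFactorial (σ.symm j))]; simp
  rw [hprod]
  split_ifs with h
  · have hle : ∀ j, ((σ.symm j : Fin n) : ℕ) ≤ c j := fun j => by simpa using h j
    have hf : ∏ i, (c i).factorial =
        (∏ j, (c j - (σ.symm j : Fin n)).factorial) * ∏ j, (c j).descFactorial (σ.symm j) := by
      rw [← Finset.prod_mul_distrib]
      exact Finset.prod_congr rfl fun j _ => (Nat.factorial_mul_descFactorial (hle j)).symm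
    have hsum : ∑ j, (c j - (σ.symm j : Fin n)) = M := by
      have h1 : ∑ j, (c j - (σ.symm j : Fin n)) + ∑ j, ((σ.symm j : Fin n) : ℕ) = ∑ j, c j := by
        rw [← Finset.sum_add_distrib]
        exact Finset.sum_congr rfl fun j _ => Nat.sub_add_cancel (hle j)
      have h2 : ∑ j, ((σ.symm j : Fin n) : ℕ) = ∑ j : Fin n, (j : ℕ) :=
        Equiv.sum_comp σ.symm (fun j : Fin n => (j : ℕ))
      omega
    have hmul := Nat.multinomial_spec (univ : Finset (Fin n)) (fun j => c j - (σ.symm j : Fin n))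
    rw [hsum] at hmul
    rw [Finsupp.multinomial_eq_of_support_subset (Finset.subset_univ _)]
    have : Nat.multinomial univ (⇑(Finsupp.equivFunOnFinite.symm c -
        Finsupp.equivFunOnFinite.symm fun j ↦ ((σ.symm j : Fin n) : ℕ))) =
        Nat.multinomial univ (fun j => c j - (σ.symm j : Fin n)) := by
      congr 1
    rw [this, hf, ← hmul]
    ring
  · have : ∃ j, c j < (σ.symm j : Fin n) := by
      by_contra hcon
      push Not at hcon
      exact h (fun j => by simpa using hcon j)
    obtain ⟨j, hj⟩ := this
    rw [Finset.prod_eq_zero (f := fun j => (c j).descFactorial (σ.symm j)) (Finset.mem_univ j)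
      (Nat.descFactorial_eq_zero_iff_lt.2 hj)]
    simp

open Finset MvPolynomial in
theorem ddh_coeff {K : Type*} [Field K] {n : ℕ} (c : Fin n → ℕ) (M : ℕ)
    (hM : ∑ i, c i = M + ∑ i : Fin n, (i : ℕ)) :
    ((∏ i, (c i).factorial : ℕ) : K) *
      coeff (Finsupp.equivFunOnFinite.symm c)
        ((Matrix.vandermonde (fun i : Fin n => (X i : MvPolynomial (Fin n) K))).det *
          (∑ i, X i) ^ M) =
      (M.factorial : K) * (Matrix.vandermonde (fun i => (c i : K))).det := by
  rw [Matrix.det_eval_matrixOfPolynomials_eq_det_vandermonde (fun i => (c i : K))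
      (fun i => descPochhammer K i) (fun i => descPochhammer_natDegree K i)
      (fun i => monic_descPochhammer K i)]
  rw [Matrix.det_apply', Matrix.det_apply', Finset.sum_mul, coeff_sum, Finset.mul_sum,
    Finset.mul_sum]
  refine Finset.sum_congr rfl fun σ _ => ?_
  have hmon : (∏ i, Matrix.vandermonde (fun i : Fin n => (X i : MvPolynomial (Fin n) K)) (σ i) i)
      = monomial (Finsupp.equivFunOnFinite.symm (fun j => ((σ.symm j : Fin n) : ℕ))) 1 := by
    rw [MvPolynomial.monomial_eq]
    simp only [Matrix.vandermonde_apply, map_one, one_mul]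
    rw [Finsupp.prod_fintype _ _ (by simp)]
    rw [← Equiv.prod_comp σ (fun j => (X j : MvPolynomial (Fin n) K) ^
      (Finsupp.equivFunOnFinite.symm (fun j => ((σ.symm j : Fin n) : ℕ))) j)]
    simp
  have hsig : ((((Equiv.Perm.sign σ : ℤˣ) : ℤ) : MvPolynomial (Fin n) K)) =
      C (((Equiv.Perm.sign σ : ℤˣ) : ℤ) : K) := by simp
  rw [hmon, hsig, mul_assoc, coeff_C_mul, coeff_monomial_mul', coeff_sum_X_pow_of_fintype]
  have key := congrArg (Nat.cast : ℕ → K) (ddh_term c M hM σ)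
  simp only [Matrix.of_apply, descPochhammer_eval_eq_descFactorial]
  push_cast at key ⊢
  rw [mul_left_comm, mul_left_comm (M.factorial : K), ← key]
  congr 2
  split_ifs with h1 h2
  · simp
  · exfalso; apply h2
    rw [Finsupp.sum_fintype _ _ (by simp)]
    have hle : ∀ j, ((σ.symm j : Fin n) : ℕ) ≤ c j := fun j => by simpa using h1 j
    have h1 : ∑ j, (c j - (σ.symm j : Fin n)) + ∑ j, ((σ.symm j : Fin n) : ℕ) = ∑ j, c j := by
      rw [← Finset.sum_add_distrib]
      exact Finset.sum_congr rfl fun j _ => Nat.sub_add_cancel (hle j)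
    have h2 : ∑ j, ((σ.symm j : Fin n) : ℕ) = ∑ j : Fin n, (j : ℕ) :=
      Equiv.sum_comp σ.symm (fun j : Fin n => (j : ℕ))
    have h3 : ∀ j, (Finsupp.equivFunOnFinite.symm c -
        Finsupp.equivFunOnFinite.symm fun j ↦ ((σ.symm j : Fin n) : ℕ)) j =
        c j - (σ.symm j : Fin n) := fun j => by simp
    simp only [h3]
    omega
  · simp

theorem hermite_sum (j M : ℕ) (hj : 0 < j) : ∑ i ∈ Finset.range j, (M + i) / j = M := by
  induction M with
  | zero =>
    refine Finset.sum_eq_zero fun i hi => ?_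
    rw [Finset.mem_range] at hi
    simpa using Nat.div_eq_of_lt hi
  | succ M ih =>
    have h1 := Finset.sum_range_succ (fun i => (M + i) / j) j
    have h2 := Finset.sum_range_succ' (fun i => (M + i) / j) j
    have h3 : (M + j) / j = M / j + 1 := Nat.add_div_right M hj
    have h4 : ∑ i ∈ Finset.range j, (M + 1 + i) / j = ∑ i ∈ Finset.range j, (M + (i + 1)) / j :=
      Finset.sum_congr rfl fun i _ => by congr 1; ring
    simp only [add_zero] at h2
    omega

/-- The Dias da Silva-Hamidoune theorem. -/
theorem ddh {p : ℕ} [hp : Fact p.Prime] (A : Finset (ZMod p)) (j : ℕ) (hj : j ≤ A.card) :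
    min p (j * (A.card - j) + 1) ≤
      ((A.powersetCard j).image (fun S => ∑ x ∈ S, x)).card := by
  classical
  set I := (A.powersetCard j).image (fun S => ∑ x ∈ S, x) with hI
  set M := min (p - 1) (j * (A.card - j)) with hMdef
  have hp2 := hp.out.two_le
  by_contra hcon
  have hIM : I.card ≤ M := by omega
  have hMp : M < p := by omega
  have hAp : A.card ≤ p := by
    have := Finset.card_le_univ A
    simpa [ZMod.card] using this
  obtain ⟨I', hII', hI'c⟩ := Finset.exists_superset_card_eq (s := I) hIM
    (by rw [ZMod.card]; omega)
  let c : Fin j → ℕ := fun i => i + (M + i) / j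
  have hcsum : ∑ i, c i = M + ∑ i : Fin j, (i : ℕ) := by
    simp only [c]
    rw [Finset.sum_add_distrib, add_comm]
    congr 1
    rw [Fin.sum_univ_eq_sum_range (fun i => (M + i) / j) j]
    rcases Nat.eq_zero_or_pos j with h0 | h0
    · subst h0; simp at hMdef; simp [hMdef]
    · exact hermite_sum j M h0
  have hcA : ∀ i, c i < A.card := by
    intro i
    have hi := i.2
    have : (M + i) / j < A.card - j + 1 := by
      rw [Nat.div_lt_iff_lt_mul (by omega)]
      have : M ≤ j * (A.card - j) := min_le_right _ _
      nlinarith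
    simp only [c]
    omega
  have hcinj : Function.Injective (fun i => (c i : ZMod p)) := by
    intro i k hik
    have h1 : c i = c k := by
      have := congrArg ZMod.val hik
      simp only at this
      rwa [ZMod.val_natCast_of_lt ((hcA i).trans_le hAp),
        ZMod.val_natCast_of_lt ((hcA k).trans_le hAp)] at this
    have hmono : StrictMono c := by
      intro a b hab
      have hab' : (a : ℕ) < b := hab
      have : (M + a) / j ≤ (M + b) / j := Nat.div_le_div_right (by omega)
      simp only [c]; omega
    exact hmono.injective h1
  let t : Fin j →₀ ℕ := Finsupp.equivFunOnFinite.symm c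
  let V : MvPolynomial (Fin j) (ZMod p) :=
    (Matrix.vandermonde (fun i : Fin j => (MvPolynomial.X i : MvPolynomial (Fin j) (ZMod p)))).det
  let f := V * (I'.toList.map (fun c => (∑ i, MvPolynomial.X i) - MvPolynomial.C c)).prod
  have hVdeg : V.totalDegree ≤ ∑ i : Fin j, (i : ℕ) := by
    simp only [V]
    rw [Matrix.det_apply']
    refine MvPolynomial.totalDegree_finsetSum_le fun σ _ => ?_
    have hsig : ((((Equiv.Perm.sign σ : ℤˣ) : ℤ) : MvPolynomial (Fin j) (ZMod p))) =
      MvPolynomial.C (((Equiv.Perm.sign σ : ℤˣ) : ℤ) : ZMod p) := by simp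
    rw [hsig]
    refine (MvPolynomial.totalDegree_mul _ _).trans ?_
    rw [MvPolynomial.totalDegree_C, zero_add]
    refine (MvPolynomial.totalDegree_finsetProd _ _).trans ?_
    refine Finset.sum_le_sum fun i _ => ?_
    rw [Matrix.vandermonde_apply]
    refine (MvPolynomial.totalDegree_pow _ _).trans ?_
    rw [MvPolynomial.totalDegree_X, mul_one]
  have hlen : I'.toList.length = M := by rw [Finset.length_toList, hI'c]
  have htdeg : t.degree = (∑ i : Fin j, (i : ℕ)) + M := by
    rw [Finsupp.degree_eq_sum]
    simp only [t, Finsupp.equivFunOnFinite_symm_apply_apply]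
    omega
  have hcoeff : MvPolynomial.coeff t f ≠ 0 := by
    have h1 := ddh_coeff_lower I'.toList V _ t hVdeg (by rw [hlen]; exact htdeg)
    have h2 := ddh_coeff (K := ZMod p) c M hcsum
    intro h0
    rw [hlen] at h1
    have h3 : MvPolynomial.coeff t (V * (∑ i, MvPolynomial.X i) ^ M) = 0 := h1.symm.trans h0
    simp only [t, V] at h3
    rw [h3, mul_zero] at h2
    have h4 : (M.factorial : ZMod p) ≠ 0 := by
      rw [Ne, ZMod.natCast_eq_zero_iff, hp.out.dvd_factorial]
      omega
    have h5 : (Matrix.vandermonde (fun i => (c i : ZMod p))).det ≠ 0 :=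
      Matrix.det_vandermonde_ne_zero_iff.2 hcinj
    exact mul_ne_zero h4 h5 h2.symm
  have hfdeg : f.totalDegree = t.degree := by
    apply le_antisymm
    · refine (MvPolynomial.totalDegree_mul _ _).trans ?_
      rw [htdeg]
      refine add_le_add hVdeg ?_
      refine (MvPolynomial.totalDegree_list_prod _).trans ?_
      rw [List.map_map, ← hlen]
      refine (List.sum_le_card_nsmul _ 1 ?_).trans (by simp)
      intro x hx
      rw [List.mem_map] at hx
      obtain ⟨d, _, rfl⟩ := hx
      simp only [Function.comp]
      refine (MvPolynomial.totalDegree_sub _ _).trans ?_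
      rw [MvPolynomial.totalDegree_C]
      simp only [_root_.zero_le, sup_of_le_left]
      refine MvPolynomial.totalDegree_finsetSum_le fun i _ => ?_
      exact (MvPolynomial.totalDegree_X i).le
    · exact MvPolynomial.le_totalDegree (MvPolynomial.mem_support_iff.2 hcoeff)
  obtain ⟨s, hsA, hs⟩ := MvPolynomial.combinatorial_nullstellensatz_exists_eval_nonzero f t hcoeff
    hfdeg (fun _ => A) (fun i => by simpa [t] using hcA i)
  simp only [f, map_mul] at hs
  have hsV := left_ne_zero_of_mul hs
  have hsP := right_ne_zero_of_mul hs
  have hdet : (Matrix.vandermonde s).det ≠ 0 := by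
    have : MvPolynomial.eval s V = (Matrix.vandermonde s).det := by
      simp only [V, Matrix.det_vandermonde]
      simp
    rwa [← this]
  have hsinj : Function.Injective s := Matrix.det_vandermonde_ne_zero_iff.1 hdet
  have hmem : ∑ i, s i ∈ I' := by
    apply hII'
    rw [hI, Finset.mem_image]
    refine ⟨Finset.univ.image s, ?_, ?_⟩
    · rw [Finset.mem_powersetCard]
      refine ⟨fun x hx => ?_, ?_⟩
      · obtain ⟨i, _, rfl⟩ := Finset.mem_image.1 hx
        exact hsA i
      · rw [Finset.card_image_of_injective _ hsinj]; simp
    · rw [Finset.sum_image (fun a _ b _ h => hsinj h)]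
  apply hsP
  rw [map_list_prod, List.map_map]
  apply List.prod_eq_zero
  rw [List.mem_map]
  exact ⟨∑ i, s i, Finset.mem_toList.2 hmem, by simp⟩

open scoped Pointwise

/-- `Reach U g`: the element `g` is a subset sum of `U`. -/
def Reach {G : Type*} [AddCommMonoid G] (U : Finset G) (g : G) : Prop :=
  ∃ S ⊆ U, ∑ x ∈ S, x = g

theorem Reach.mono {G : Type*} [AddCommMonoid G] {U W : Finset G} {g : G} (h : Reach U g)
    (hUW : U ⊆ W) : Reach W g := by
  obtain ⟨S, hS, hg⟩ := h
  exact ⟨S, hS.trans hUW, hg⟩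

theorem reach_zero {G : Type*} [AddCommMonoid G] (U : Finset G) : Reach U 0 :=
  ⟨∅, Finset.empty_subset _, by simp⟩

theorem Reach.add {G : Type*} [AddCommMonoid G] [DecidableEq G] {U W : Finset G} {g h : G}
    (hg : Reach U g) (hh : Reach W h) (hd : Disjoint U W) : Reach (U ∪ W) (g + h) := by
  obtain ⟨S, hS, rfl⟩ := hg
  obtain ⟨T, hT, rfl⟩ := hh
  refine ⟨S ∪ T, Finset.union_subset_union hS hT, ?_⟩
  exact Finset.sum_union (Finset.disjoint_of_subset_left hS (Finset.disjoint_of_subset_right hT hd))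

/-- Sums of `j`-subsets inside one fibre. -/
theorem fiber_sums {p : ℕ} [hp : Fact p.Prime] (F : Finset (ZMod p × ZMod p)) (c : ZMod p)
    (hF : ∀ a ∈ F, a.1 = c) (j : ℕ) (hj : j ≤ F.card) :
    ∃ Y : Finset (ZMod p), min p (j * (F.card - j) + 1) ≤ Y.card ∧
      ∀ y ∈ Y, ∃ S ⊆ F, S.card = j ∧ ∑ x ∈ S, x = ((j : ZMod p) * c, y) := by
  classical
  have hinj : Set.InjOn Prod.snd (F : Set (ZMod p × ZMod p)) := by
    intro a ha b hb hab
    exact Prod.ext ((hF a ha).trans (hF b hb).symm) hab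
  have hcard : (F.image Prod.snd).card = F.card := Finset.card_image_of_injOn hinj
  refine ⟨_, by simpa only [hcard] using ddh (F.image Prod.snd) j (by rw [hcard]; exact hj), ?_⟩
  intro y hy
  obtain ⟨T, hT, rfl⟩ := Finset.mem_image.1 hy
  rw [Finset.mem_powersetCard] at hT
  obtain ⟨hT1, hT2⟩ := hT
  let S := F.filter (fun a => a.2 ∈ T)
  have hST : S.image Prod.snd = T := by
    ext y
    simp only [S, Finset.mem_image, Finset.mem_filter]
    constructor
    · rintro ⟨a, ⟨_, h⟩, rfl⟩; exact h
    · intro hy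
      obtain ⟨a, ha, rfl⟩ := Finset.mem_image.1 (hT1 hy)
      exact ⟨a, ⟨ha, hy⟩, rfl⟩
  have hSF : S ⊆ F := Finset.filter_subset _ _
  have hinjS : Set.InjOn Prod.snd (S : Set (ZMod p × ZMod p)) := hinj.mono (by exact_mod_cast hSF)
  have hSc : S.card = j := by rw [← hT2, ← hST, Finset.card_image_of_injOn hinjS]
  refine ⟨S, hSF, hSc, ?_⟩
  apply Prod.ext
  · rw [Prod.fst_sum, Finset.sum_congr rfl (fun a ha => hF a (hSF ha)), Finset.sum_const, hSc]
    simp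
  · rw [Prod.snd_sum, ← hST, Finset.sum_image hinjS]

theorem cd_le {p : ℕ} [hp : Fact p.Prime] {X Y : Finset (ZMod p)} {a b : ℕ}
    (hX : min p (a + 1) ≤ X.card) (hY : min p (b + 1) ≤ Y.card) :
    min p (a + b + 1) ≤ (X + Y).card := by
  have hp2 := hp.out.two_le
  have hX0 : X.Nonempty := Finset.card_pos.1 (by omega)
  have hY0 : Y.Nonempty := Finset.card_pos.1 (by omega)
  have := ZMod.cauchy_davenport hp.out hX0 hY0
  omega

theorem multi_fiber {p : ℕ} [hp : Fact p.Prime] (U : Finset (ZMod p × ZMod p))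
    (C : Finset (ZMod p)) :
    ∃ (c : ZMod p) (Y : Finset (ZMod p)),
      min p ((∑ c ∈ C, (U.filter (fun a => a.1 = c)).card / 2 *
        ((U.filter (fun a => a.1 = c)).card - (U.filter (fun a => a.1 = c)).card / 2)) + 1) ≤ Y.card ∧
      ∀ y ∈ Y, Reach (U.filter (fun a => a.1 ∈ C)) (c, y) := by
  classical
  induction C using Finset.induction_on with
  | empty =>
    refine ⟨0, {0}, by simp, ?_⟩
    intro y hy
    rw [Finset.mem_singleton] at hy
    subst hy
    exact reach_zero _
  | insert d C hd ih =>
    obtain ⟨c, Y, hY, hr⟩ := ih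
    obtain ⟨Z, hZ, hs⟩ := fiber_sums (U.filter (fun a => a.1 = d)) d (by simp)
      ((U.filter (fun a => a.1 = d)).card / 2) (Nat.div_le_self _ _)
    refine ⟨(((U.filter (fun a => a.1 = d)).card / 2 : ℕ) : ZMod p) * d + c, Z + Y, ?_, ?_⟩
    rotate_left
    · intro y hy
      obtain ⟨z, hz, y', hy', rfl⟩ := Finset.mem_add.1 hy
      obtain ⟨S, hSF, _, hS⟩ := hs z hz
      have h1 : Reach (U.filter (fun a => a.1 = d)) _ := ⟨S, hSF, hS⟩
      have h2 := h1.add (hr y' hy') (by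
        rw [Finset.disjoint_left]
        intro a ha hb
        simp only [Finset.mem_filter] at ha hb
        exact hd (ha.2 ▸ hb.2))
      refine h2.mono ?_
      intro a
      simp only [Finset.mem_union, Finset.mem_filter, Finset.mem_insert]
      tauto
    · rw [Finset.sum_insert hd]
      exact cd_le hZ hY

theorem groups {p : ℕ} [hp : Fact p.Prime] (U : Finset (ZMod p × ZMod p)) (H : ℕ)
    (hfib : ∀ c, (U.filter (fun a => a.1 = c)).card ≤ H) (G : ℕ)
    (hG : 19 * H + 20 * G ≤ U.card) :
    ∃ W ⊆ U, W.card = 20 * G ∧ ∃ X : Finset (ZMod p), min p (100 * G + 1) ≤ X.card ∧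
      ∀ x ∈ X, ∃ y, Reach W (x, y) := by
  classical
  induction G with
  | zero =>
    refine ⟨∅, by simp, by simp, {0}, by simp, ?_⟩
    intro x hx
    rw [Finset.mem_singleton] at hx
    subst hx
    exact ⟨0, reach_zero _⟩
  | succ G ih =>
    obtain ⟨W, hWU, hWc, X, hX, hXr⟩ := ih (by omega)
    have hcard : (U \ W).card = U.card - 20 * G := by rw [Finset.card_sdiff_of_subset hWU, hWc]
    have h1 : (U \ W).card ≤ H * ((U \ W).image Prod.fst).card := by
      refine Finset.card_le_mul_card_image _ _ fun c _ => ?_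
      refine (Finset.card_le_card ?_).trans (hfib c)
      exact Finset.filter_subset_filter _ Finset.sdiff_subset
    have h2 : 20 ≤ ((U \ W).image Prod.fst).card := by
      by_contra hcon
      have : H * ((U \ W).image Prod.fst).card ≤ H * 19 := Nat.mul_le_mul_left _ (by omega)
      omega
    obtain ⟨T, hTs, hTc⟩ := Finset.exists_subset_card_eq h2
    have hch : ∀ x : ZMod p, ∃ a : ZMod p × ZMod p, x ∈ T → a ∈ U \ W ∧ a.1 = x := by
      intro x
      by_cases hx : x ∈ T
      · obtain ⟨a, ha, hax⟩ := Finset.mem_image.1 (hTs hx)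
        exact ⟨a, fun _ => ⟨ha, hax⟩⟩
      · exact ⟨0, fun h => absurd h hx⟩
    choose s hs using hch
    have hsinj : Set.InjOn s (T : Set (ZMod p)) := by
      intro x hx y hy hxy
      rw [← (hs x hx).2, ← (hs y hy).2, hxy]
    have hd := ddh T 10 (by omega)
    rw [hTc] at hd
    have hDsub : T.image s ⊆ U \ W := by
      intro a ha
      obtain ⟨x, hx, rfl⟩ := Finset.mem_image.1 ha
      exact (hs x hx).1
    have hdisj : Disjoint (T.image s) W := by
      rw [Finset.disjoint_left]
      intro a ha hb
      exact (Finset.mem_sdiff.1 (hDsub ha)).2 hb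
    refine ⟨T.image s ∪ W, Finset.union_subset (hDsub.trans Finset.sdiff_subset) hWU, ?_,
      (T.powersetCard 10).image (fun S => ∑ x ∈ S, x) + X, ?_, ?_⟩
    rotate_left 2
    · intro x hx
      obtain ⟨x1, hx1, x2, hx2, rfl⟩ := Finset.mem_add.1 hx
      obtain ⟨y2, hy2⟩ := hXr x2 hx2
      obtain ⟨S, hS, rfl⟩ := Finset.mem_image.1 hx1
      rw [Finset.mem_powersetCard] at hS
      have hr1 : Reach (T.image s) (∑ x ∈ S, s x) :=
        ⟨S.image s, Finset.image_subset_image hS.1, Finset.sum_image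
          (hsinj.mono (by exact_mod_cast hS.1))⟩
      refine ⟨(∑ x ∈ S, s x).2 + y2, ?_⟩
      convert hr1.add hy2 hdisj using 1
      apply Prod.ext
      · simp only [Prod.fst_add, Prod.fst_sum]
        congr 1
        exact Finset.sum_congr rfl fun x hx => ((hs x (hS.1 hx)).2).symm
      · simp
    · rw [Finset.card_union_of_disjoint hdisj, Finset.card_image_of_injOn hsinj, hTc, hWc]; ring
    · have := cd_le (a := 100) (b := 100 * G) (by simpa using hd) hX
      refine le_trans ?_ this
      exact le_of_eq (by congr 1; ring)

theorem sum_sq_Icc (n : ℕ) :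
    ∑ c ∈ Finset.Icc (-(n : ℤ)) n, (c : ℝ) ^ 2 = n * (n + 1) * (2 * n + 1) / 3 ∧
    ∑ c ∈ Finset.Icc (-(n : ℤ)) n, (c : ℝ) ^ 4 =
      n * (n + 1) * (2 * n + 1) * (3 * n ^ 2 + 3 * n - 1) / 15 := by
  induction n with
  | zero => simp
  | succ n ih =>
    have h : Finset.Icc (-((n + 1 : ℕ) : ℤ)) ((n + 1 : ℕ) : ℤ) =
        insert ((n : ℤ) + 1) (insert (-((n : ℤ) + 1)) (Finset.Icc (-(n : ℤ)) n)) := by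
      ext x
      simp only [Finset.mem_Icc, Finset.mem_insert]
      push_cast
      omega
    have h1 : ((n : ℤ) + 1) ∉ (insert (-((n : ℤ) + 1)) (Finset.Icc (-(n : ℤ)) n)) := by
      simp only [Finset.mem_Icc, Finset.mem_insert]; omega
    have h2 : (-((n : ℤ) + 1)) ∉ (Finset.Icc (-(n : ℤ)) n) := by
      simp only [Finset.mem_Icc]; omega
    rw [h, Finset.sum_insert h1, Finset.sum_insert h2, Finset.sum_insert h1, Finset.sum_insert h2,
      ih.1, ih.2]
    push_cast
    constructor <;> ring

theorem sum_quartic (r : ℕ) (hr : 0 < r) :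
    ∑ c ∈ Finset.Icc (-(r : ℤ)) r, (100 * (1 - (c : ℝ) ^ 2 / (r : ℝ) ^ 2) ^ 2 + 1) ≤
      100 * (16 * (r : ℝ) / 15) + (2 * (r : ℝ) + 1) := by
  have hr' : (0 : ℝ) < r := by exact_mod_cast hr
  have h : ∀ c : ℤ, (100 * (1 - (c : ℝ) ^ 2 / (r : ℝ) ^ 2) ^ 2 + 1) =
      101 - (200 / (r : ℝ) ^ 2) * (c : ℝ) ^ 2 + (100 / (r : ℝ) ^ 4) * (c : ℝ) ^ 4 := by
    intro c; field_simp; ring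
  simp only [h]
  rw [Finset.sum_add_distrib, Finset.sum_sub_distrib, ← Finset.mul_sum, ← Finset.mul_sum,
    (sum_sq_Icc r).1, (sum_sq_Icc r).2, Finset.sum_const, Int.card_Icc]
  have hc : ((((r : ℤ) + 1 - -(r : ℤ)).toNat : ℕ) : ℝ) = 2 * r + 1 := by
    have : ((r : ℤ) + 1 - -(r : ℤ)).toNat = 2 * r + 1 := by omega
    rw [this]; push_cast; ring
  rw [nsmul_eq_mul, hc]
  have : (2 * (r:ℝ) + 1) * 101 - 200 / r ^ 2 * (r * (r + 1) * (2 * r + 1) / 3) +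
      100 / r ^ 4 * (r * (r + 1) * (2 * r + 1) * (3 * r ^ 2 + 3 * r - 1) / 15) =
      100 * (16 * r / 15) + (2 * r + 1) - 100 / (15 * r ^ 3) := by
    field_simp; ring
  rw [this]
  have : 0 ≤ 100 / (15 * (r : ℝ) ^ 3) := by positivity
  linarith

/-- The numerical estimate for the sum over fibres. -/
theorem fiber_quadratic {p : ℕ} [hp : Fact p.Prime] (h6 : 6000 < p)
    (U : Finset (ZMod p × ZMod p)) (hU : 4 * p ≤ 5 * U.card + 100)
    (hS : ∑ a ∈ U, ((a.1.valMinAbs : ℤ) : ℝ) ^ 2 ≤ (p : ℝ) ^ 3 / 1230) :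
    p ≤ (∑ c : ZMod p, (U.filter (fun a => a.1 = c)).card / 2 *
        ((U.filter (fun a => a.1 = c)).card - (U.filter (fun a => a.1 = c)).card / 2)) + 1 := by
  classical
  set m : ZMod p → ℕ := fun c => (U.filter (fun a => a.1 = c)).card with hm
  obtain ⟨r, hr⟩ : ∃ r, r = 3 * p / 50 := ⟨_, rfl⟩
  have hr0 : 0 < r := by omega
  have hr1 : (50 : ℝ) * r ≤ 3 * p := by exact_mod_cast (by omega : 50 * r ≤ 3 * p)
  have hr2 : (3 : ℝ) * p ≤ 50 * r + 50 := by exact_mod_cast (by omega : 3 * p ≤ 50 * r + 50)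
  have hrR : (0 : ℝ) < r := by exact_mod_cast hr0
  have hpR : (6000 : ℝ) < p := by exact_mod_cast h6
  have hmsum : ∑ c, (m c : ℝ) = U.card := by
    have := Finset.card_eq_sum_card_fiberwise (f := Prod.fst) (s := U) (t := Finset.univ)
      (fun _ _ => Finset.mem_coe.2 (Finset.mem_univ _))
    rw [this]; push_cast; rfl
  have hmsq : ∑ c : ZMod p, (m c : ℝ) * ((c.valMinAbs : ℤ) : ℝ) ^ 2 =
      ∑ a ∈ U, ((a.1.valMinAbs : ℤ) : ℝ) ^ 2 := by
    rw [← Finset.sum_fiberwise (s := U) (g := fun a => a.1)]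
    refine Finset.sum_congr rfl fun c _ => ?_
    rw [Finset.sum_congr rfl (g := fun _ => ((c.valMinAbs : ℤ) : ℝ) ^ 2)]
    · rw [Finset.sum_const, nsmul_eq_mul]
    · intro a ha; rw [(Finset.mem_filter.1 ha).2]
  let g : ℤ → ℝ := fun c => 100 * (1 - (c : ℝ) ^ 2 / r ^ 2) ^ 2 + 1
  have hpt : ∀ c : ZMod p, 20 * (m c : ℝ) - (20 / r ^ 2) * ((m c : ℝ) * ((c.valMinAbs : ℤ) : ℝ) ^ 2)
      - (if c.valMinAbs ∈ Finset.Icc (-(r : ℤ)) r then g c.valMinAbs else 0) ≤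
      4 * ((m c / 2 * (m c - m c / 2) : ℕ) : ℝ) := by
    intro c
    have hfl : (m c : ℝ) ^ 2 - 1 ≤ 4 * ((m c / 2 * (m c - m c / 2) : ℕ) : ℝ) := by
      have : m c ^ 2 ≤ 4 * (m c / 2 * (m c - m c / 2)) + 1 := by
        rcases Nat.even_or_odd' (m c) with ⟨k, hk | hk⟩
        · have h1 : m c / 2 = k := by omega
          have h2 : m c - m c / 2 = k := by omega
          rw [h2, h1, hk]; nlinarith
        · have h1 : m c / 2 = k := by omega
          have h2 : m c - m c / 2 = k + 1 := by omega
          rw [h2, h1, hk]; nlinarith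
      have : (m c : ℝ) ^ 2 ≤ 4 * ((m c / 2 * (m c - m c / 2) : ℕ) : ℝ) + 1 := by exact_mod_cast this
      linarith
    have heq : 20 * (m c : ℝ) - (20 / r ^ 2) * ((m c : ℝ) * ((c.valMinAbs : ℤ) : ℝ) ^ 2) =
      20 * (m c : ℝ) * (1 - ((c.valMinAbs : ℤ) : ℝ) ^ 2 / r ^ 2) := by field_simp
    rw [heq]
    split_ifs with hc
    · simp only [g]
      nlinarith [sq_nonneg ((m c : ℝ) - 10 * (1 - ((c.valMinAbs : ℤ) : ℝ) ^ 2 / r ^ 2))]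
    · have h1 : (r : ℝ) ^ 2 ≤ ((c.valMinAbs : ℤ) : ℝ) ^ 2 := by
        have : (r : ℤ) ^ 2 ≤ c.valMinAbs ^ 2 := by
          rw [sq_le_sq, abs_of_nonneg (by positivity : (0 : ℤ) ≤ r)]
          by_contra hcon
          push Not at hcon
          rw [abs_lt] at hcon
          exact hc (Finset.mem_Icc.2 ⟨by omega, by omega⟩)
        exact_mod_cast this
      have h2 : (1 : ℝ) ≤ ((c.valMinAbs : ℤ) : ℝ) ^ 2 / r ^ 2 := by
        rw [le_div_iff₀ (by positivity)]; linarith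
      have h3 : (0 : ℝ) ≤ m c := by positivity
      have h4 : (0 : ℝ) ≤ 4 * ((m c / 2 * (m c - m c / 2) : ℕ) : ℝ) := by positivity
      nlinarith
  have hgsum : ∑ c : ZMod p, (if c.valMinAbs ∈ Finset.Icc (-(r : ℤ)) r then g c.valMinAbs else 0)
      ≤ 100 * (16 * r / 15) + (2 * r + 1) := by
    rw [← Finset.sum_filter]
    have hinj : Function.Injective (ZMod.valMinAbs : ZMod p → ℤ) := by
      intro a b hab
      rw [← ZMod.coe_valMinAbs a, ← ZMod.coe_valMinAbs b, hab]
    rw [← Finset.sum_image (f := g) (g := fun c : ZMod p => c.valMinAbs) (fun a _ b _ h => hinj h)]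
    refine le_trans ?_ (sum_quartic r hr0)
    refine Finset.sum_le_sum_of_subset_of_nonneg ?_ ?_
    · intro x hx
      obtain ⟨c, hc, rfl⟩ := Finset.mem_image.1 hx
      exact (Finset.mem_filter.1 hc).2
    · intro i _ _; simp only [g]; positivity
  have htot := Finset.sum_le_sum (s := (Finset.univ : Finset (ZMod p))) (fun c _ => hpt c)
  rw [Finset.sum_sub_distrib, Finset.sum_sub_distrib, ← Finset.mul_sum, ← Finset.mul_sum, hmsum,
    hmsq, ← Finset.mul_sum, ← Nat.cast_sum] at htot
  set Q := ∑ c : ZMod p, m c / 2 * (m c - m c / 2) with hQ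
  by_contra hcon
  have hQ' : (Q : ℝ) + 1 < p := by exact_mod_cast not_le.1 hcon
  have hUR : (4 : ℝ) * p ≤ 5 * U.card + 100 := by exact_mod_cast hU
  have hdiv : 20 / (r : ℝ) ^ 2 * ∑ a ∈ U, ((a.1.valMinAbs : ℤ) : ℝ) ^ 2 ≤ 20 * (0.228 * p) := by
    rw [div_mul_eq_mul_div, div_le_iff₀ (by positivity)]
    have h1 : (0.0598 : ℝ) * p ≤ r := by linarith
    have h2 : (0.0598 * p : ℝ) ^ 2 ≤ (r : ℝ) ^ 2 := by
      apply pow_le_pow_left₀ (by positivity) h1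
    have h3 : (p : ℝ) * (0.0598 * p) ^ 2 ≤ p * (r : ℝ) ^ 2 :=
      mul_le_mul_of_nonneg_left h2 (by positivity)
    have h4 : (0:ℝ) ≤ (p:ℝ)^3 := by positivity
    nlinarith
  linarith

theorem cos_le_exp_aux {x : ℝ} (h0 : 0 ≤ x) (h1 : x ≤ Real.pi / 2) :
    Real.cos x ≤ Real.exp (-(x ^ 2 / 2)) := by
  have hd : ∀ y : ℝ, HasDerivAt (fun x => Real.cos x * Real.exp (x ^ 2 / 2))
      (Real.exp (y ^ 2 / 2) * (y * Real.cos y - Real.sin y)) y := by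
    intro y
    have h2 : HasDerivAt (fun x : ℝ => x ^ 2 / 2) y y := by
      have := (hasDerivAt_pow 2 y).div_const 2
      refine this.congr_deriv ?_
      norm_num
    have := (Real.hasDerivAt_cos y).mul h2.exp
    refine this.congr_deriv ?_
    ring
  have hanti : AntitoneOn (fun x => Real.cos x * Real.exp (x ^ 2 / 2))
      (Set.Icc 0 (Real.pi / 2)) := by
    apply antitoneOn_of_deriv_nonpos (convex_Icc _ _)
    · exact fun y _ => (hd y).continuousAt.continuousWithinAt
    · exact fun y _ => (hd y).differentiableAt.differentiableWithinAt
    · intro y hy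
      rw [interior_Icc] at hy
      rw [(hd y).deriv]
      have ht := Real.lt_tan hy.1 hy.2
      have hc : 0 < Real.cos y := Real.cos_pos_of_mem_Ioo ⟨by linarith [hy.1, Real.pi_pos], hy.2⟩
      rw [Real.tan_eq_sin_div_cos, lt_div_iff₀ hc] at ht
      have := Real.exp_pos (y ^ 2 / 2)
      nlinarith
  have := hanti (Set.left_mem_Icc.2 (by positivity)) (Set.mem_Icc.2 ⟨h0, h1⟩) h0
  simp only [Real.cos_zero] at this
  rw [Real.exp_neg, ← one_div, le_div_iff₀ (Real.exp_pos _)]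
  simpa using this

theorem norm_one_add_char {p : ℕ} [hp : Fact p.Prime] (t : ZMod p) :
    ‖1 + ZMod.stdAddChar t‖ ≤
      2 * Real.exp (-((Real.pi * ((t.valMinAbs : ℤ) : ℝ) / p) ^ 2 / 2)) := by
  have hp0 : (0 : ℝ) < p := by exact_mod_cast hp.out.pos
  set m : ℤ := t.valMinAbs with hm
  set β : ℝ := Real.pi * (m : ℝ) / p with hβ
  have h1 : (1 : ℂ) + ZMod.stdAddChar t =
      (2 * Real.cos β : ℝ) * Complex.exp ((β : ℂ) * Complex.I) := by
    conv_lhs => rw [← ZMod.coe_valMinAbs t, ZMod.stdAddChar_coe]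
    have e1 : (2 * Real.pi * Complex.I * (t.valMinAbs : ℂ) / (p : ℂ)) =
        (β : ℂ) * Complex.I + (β : ℂ) * Complex.I := by
      rw [hβ, hm]; push_cast; ring
    rw [e1, Complex.exp_add]
    push_cast
    rw [Complex.cos]
    have e2 : Complex.exp (-(β : ℂ) * Complex.I) * Complex.exp ((β : ℂ) * Complex.I) = 1 := by
      rw [← Complex.exp_add]; simp
    linear_combination -e2
  rw [h1, norm_mul, Complex.norm_exp_ofReal_mul_I, mul_one, Complex.norm_real, Real.norm_eq_abs,
    abs_mul, abs_two]
  have hb : |β| ≤ Real.pi / 2 := by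
    have h2 : (|m| : ℝ) ≤ p / 2 := by
      have := ZMod.natAbs_valMinAbs_le t
      have h3 : 2 * |m| ≤ (p : ℤ) := by 
        have h4 : |m| = (m.natAbs : ℤ) := Int.abs_eq_natAbs m
        rw [← hm] at this; rw [h4]; omega
      have : (2 : ℝ) * |(m : ℝ)| ≤ p := by exact_mod_cast h3
      linarith
    rw [hβ, abs_div, abs_mul, abs_of_pos Real.pi_pos, abs_of_pos hp0, div_le_iff₀ hp0]
    nlinarith [Real.pi_pos]
  have hc : 0 ≤ Real.cos |β| := Real.cos_nonneg_of_mem_Icc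
    ⟨by linarith [abs_nonneg β, Real.pi_pos], hb⟩
  have := cos_le_exp_aux (abs_nonneg β) hb
  rw [sq_abs] at this
  rw [← Real.cos_abs β, abs_of_nonneg hc]
  linarith

theorem fourier_count {p : ℕ} [hp : Fact p.Prime] (B : Finset (ZMod p × ZMod p)) :
    ∑ u : ZMod p, ∑ v : ZMod p, ∏ a ∈ B, (1 + ZMod.stdAddChar (u * a.1 + v * a.2)) =
      (p : ℂ) ^ 2 * ((B.powerset.filter (fun S => ∑ x ∈ S, x = 0)).card : ℂ) := by
  classical
  have h1 : ∀ u v : ZMod p, ∏ a ∈ B, (1 + ZMod.stdAddChar (u * a.1 + v * a.2)) =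
      ∑ S ∈ B.powerset, (ZMod.stdAddChar (u * (∑ x ∈ S, x).1) : ℂ) *
        ZMod.stdAddChar (v * (∑ x ∈ S, x).2) := by
    intro u v
    rw [Finset.prod_one_add]
    refine Finset.sum_congr rfl fun S hS => ?_
    clear hS
    rw [← AddChar.map_add_eq_mul, Prod.fst_sum, Prod.snd_sum, Finset.mul_sum, Finset.mul_sum,
      ← Finset.sum_add_distrib]
    induction S using Finset.induction_on with
    | empty => simp
    | insert a s ha ih => rw [Finset.prod_insert ha, Finset.sum_insert ha, ih, ← AddChar.map_add_eq_mul]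
  simp only [h1]
  have h2 : ∀ u : ZMod p, ∑ v : ZMod p, ∑ S ∈ B.powerset,
      (ZMod.stdAddChar (u * (∑ x ∈ S, x).1) : ℂ) * ZMod.stdAddChar (v * (∑ x ∈ S, x).2) =
      ∑ S ∈ B.powerset, (ZMod.stdAddChar (u * (∑ x ∈ S, x).1) : ℂ) *
        (if (∑ x ∈ S, x).2 = 0 then (p : ℂ) else 0) := by
    intro u
    rw [Finset.sum_comm]
    refine Finset.sum_congr rfl fun S _ => ?_
    rw [← Finset.mul_sum, AddChar.sum_mulShift _ (ZMod.isPrimitive_stdAddChar p)]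
    simp [ZMod.card]
  simp only [h2]
  rw [Finset.sum_comm]
  have h3 : ∀ S ∈ B.powerset, ∑ u : ZMod p, (ZMod.stdAddChar (u * (∑ x ∈ S, x).1) : ℂ) *
        (if (∑ x ∈ S, x).2 = 0 then (p : ℂ) else 0) =
        (if ∑ x ∈ S, x = 0 then (p : ℂ) ^ 2 else 0) := by
    intro S _
    rw [← Finset.sum_mul, AddChar.sum_mulShift _ (ZMod.isPrimitive_stdAddChar p)]
    by_cases ha : (∑ x ∈ S, x).1 = 0 <;> by_cases hb : (∑ x ∈ S, x).2 = 0
    · have : ∑ x ∈ S, x = 0 := Prod.ext ha hb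
      simp [this, ZMod.card, sq]
    · have : ¬ ∑ x ∈ S, x = 0 := fun h => hb (by rw [h]; rfl)
      simp [this, hb]
    · have : ¬ ∑ x ∈ S, x = 0 := fun h => ha (by rw [h]; rfl)
      simp [this, ha]
    · have : ¬ ∑ x ∈ S, x = 0 := fun h => hb (by rw [h]; rfl)
      simp [this, hb]
  rw [Finset.sum_congr rfl h3, ← Finset.sum_filter, Finset.sum_const, nsmul_eq_mul, mul_comm]

theorem log_bound {p : ℕ} (h6 : 6000 < p) : Real.log p ≤ (p : ℝ) / 500 := by
  have hp : (6000 : ℝ) < p := by exact_mod_cast h6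
  have h1 : Real.log (p / 1024 : ℝ) ≤ p / 1024 - 1 := Real.log_le_sub_one_of_pos (by positivity)
  rw [Real.log_div (by positivity) (by norm_num)] at h1
  have h2 : Real.log 1024 = 10 * Real.log 2 := by
    rw [show (1024 : ℝ) = 2 ^ 10 by norm_num, Real.log_pow]; norm_num
  have := Real.log_two_lt_d9
  rw [h2] at h1
  linarith

theorem two_pow_bound : ∀ n : ℕ, 40 ≤ n → 2 * n ^ 4 < 2 ^ n := by
  intro n hn
  induction n, hn using Nat.le_induction with
  | base => norm_num
  | succ n hn ih =>
    rw [pow_succ 2 n]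
    have : 2 * (n + 1) ^ 4 ≤ 2 * (2 * n ^ 4) := by
      have h1 : 40 * n ^ 3 ≤ n ^ 4 := by rw [pow_succ n 3]; nlinarith [pow_pos (by omega : 0 < n) 3]
      have h2 : 40 * n ^ 2 ≤ n ^ 3 := by rw [pow_succ n 2]; nlinarith [pow_pos (by omega : 0 < n) 2]
      have h3 : 40 * n ≤ n ^ 2 := by nlinarith
      nlinarith
    linarith

theorem fourier_main {p : ℕ} [hp : Fact p.Prime] (h6 : 6000 < p) (B : Finset (ZMod p × ZMod p))
    (hn : p ≤ B.card) (hB : (B.powerset.filter (fun S => ∑ x ∈ S, x = 0)).card ≤ 2) :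
    ∃ u v : ZMod p, (u ≠ 0 ∨ v ≠ 0) ∧
      ∑ a ∈ B, (((u * a.1 + v * a.2).valMinAbs : ℤ) : ℝ) ^ 2 ≤ (p : ℝ) ^ 3 / 1230 := by
  classical
  have hp0 : (0 : ℝ) < p := by exact_mod_cast hp.out.pos
  let P : ZMod p × ZMod p → ℂ := fun w => ∏ a ∈ B, (1 + ZMod.stdAddChar (w.1 * a.1 + w.2 * a.2))
  have hsum : ∑ w : ZMod p × ZMod p, P w =
      (p : ℂ) ^ 2 * ((B.powerset.filter (fun S => ∑ x ∈ S, x = 0)).card : ℂ) := by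
    rw [← fourier_count B, Fintype.sum_prod_type]
  have hex : ∃ w : ZMod p × ZMod p, w ≠ 0 ∧ (2 : ℝ) ^ B.card / p ^ 2 ≤ ‖P w‖ := by
    by_contra hcon
    push Not at hcon
    have hP0 : P 0 = 2 ^ B.card := by
      simp only [P, Prod.fst_zero, Prod.snd_zero, zero_mul, add_zero, AddChar.map_zero_eq_one]
      rw [Finset.prod_const]; norm_num
    rw [← Finset.add_sum_erase _ _ (Finset.mem_univ (0 : ZMod p × ZMod p)), hP0] at hsum
    have h1 : (2 : ℝ) ^ B.card ≤ 2 * p ^ 2 + ∑ w ∈ Finset.univ.erase (0 : ZMod p × ZMod p), ‖P w‖ := by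
      have e1 : ((2 : ℂ) ^ B.card) = (p : ℂ) ^ 2 *
        ((B.powerset.filter (fun S => ∑ x ∈ S, x = 0)).card : ℂ) -
          ∑ w ∈ Finset.univ.erase (0 : ZMod p × ZMod p), P w := by
        rw [← hsum]; ring
      have e2 := congrArg norm e1
      rw [norm_pow] at e2
      have e3 : ‖(2 : ℂ)‖ = 2 := by norm_num
      rw [e3] at e2
      rw [e2]
      refine (norm_sub_le _ _).trans (add_le_add ?_ (norm_sum_le _ _))
      rw [norm_mul, norm_pow, Complex.norm_natCast, Complex.norm_natCast]
      have : ((B.powerset.filter (fun S => ∑ x ∈ S, x = 0)).card : ℝ) ≤ 2 := by exact_mod_cast hB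
      nlinarith [sq_nonneg (p : ℝ)]
    have h2 : ∑ w ∈ Finset.univ.erase (0 : ZMod p × ZMod p), ‖P w‖ ≤
        ((p : ℝ) ^ 2 - 1) * ((2 : ℝ) ^ B.card / p ^ 2) := by
      refine (Finset.sum_le_card_nsmul _ _ _ (fun w hw =>
        (hcon w (Finset.ne_of_mem_erase hw)).le)).trans ?_
      rw [nsmul_eq_mul, Finset.card_erase_of_mem (Finset.mem_univ _), Finset.card_univ,
        Fintype.card_prod, ZMod.card, Nat.cast_sub (Nat.one_le_iff_ne_zero.2 (by
          have := hp.out.pos; positivity))]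
      push_cast
      rw [sq]
    have h3 : (2 : ℝ) * p ^ 4 < 2 ^ B.card := by
      have : 2 * p ^ 4 < 2 ^ B.card :=
        (two_pow_bound p (by omega)).trans_le (Nat.pow_le_pow_right (by norm_num) hn)
      exact_mod_cast this
    have h4 : (2 : ℝ) ^ B.card / p ^ 2 ≤ 2 * p ^ 2 := by
      have : ((p : ℝ) ^ 2 - 1) * ((2 : ℝ) ^ B.card / p ^ 2) =
        (2 : ℝ) ^ B.card - (2 : ℝ) ^ B.card / p ^ 2 := by field_simp
      linarith
    rw [div_le_iff₀ (by positivity)] at h4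
    nlinarith
  obtain ⟨w, hw0, hw⟩ := hex
  refine ⟨w.1, w.2, ?_, ?_⟩
  · by_contra hcon
    push Not at hcon
    exact hw0 (Prod.ext hcon.1 hcon.2)
  · set M := ∑ a ∈ B, (((w.1 * a.1 + w.2 * a.2).valMinAbs : ℤ) : ℝ) ^ 2 with hM
    have h1 : ‖P w‖ ≤ 2 ^ B.card * Real.exp (-(Real.pi ^ 2 / (2 * p ^ 2) * M)) := by
      simp only [P]
      rw [norm_prod]
      refine (Finset.prod_le_prod (fun _ _ => norm_nonneg _)
        (fun a _ => norm_one_add_char (w.1 * a.1 + w.2 * a.2))).trans ?_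
      rw [Finset.prod_mul_distrib, Finset.prod_const, ← Real.exp_sum]
      apply le_of_eq
      congr 2
      rw [hM, Finset.mul_sum, ← Finset.sum_neg_distrib]
      refine Finset.sum_congr rfl fun a _ => ?_
      field_simp
    have h2 : 1 / (p : ℝ) ^ 2 ≤ Real.exp (-(Real.pi ^ 2 / (2 * p ^ 2) * M)) := by
      have := hw.trans h1
      rw [div_eq_mul_one_div] at this
      exact le_of_mul_le_mul_left this (by positivity)
    have h3 := Real.log_le_log (by positivity) h2
    rw [Real.log_exp, one_div, Real.log_inv, Real.log_pow] at h3
    have h4 := log_bound h6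
    have h5 : Real.pi ^ 2 / (2 * p ^ 2) * M ≤ 2 * (p / 500) := by push_cast at h3; linarith
    have h6 : Real.pi ^ 2 * M ≤ 2 * (p / 500) * (2 * p ^ 2) := by
      rw [div_mul_eq_mul_div, div_le_iff₀ (by positivity)] at h5
      exact h5
    have h7 : (9.8596 : ℝ) ≤ Real.pi ^ 2 := by nlinarith [Real.pi_gt_d2]
    have h8 : 0 ≤ M := Finset.sum_nonneg fun _ _ => sq_nonneg _
    have h9 : 9.8596 * M ≤ Real.pi ^ 2 * M := mul_le_mul_of_nonneg_right h7 h8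
    have h10 : (0 : ℝ) < (p : ℝ) ^ 3 := by positivity
    nlinarith

/-- All nonempty proper subsets of `B` have nonzero sum. -/
def Good {G : Type*} [AddCommMonoid G] (B : Finset G) : Prop :=
  ∀ S ⊆ B, S.Nonempty → S ≠ B → ∑ x ∈ S, x ≠ 0

theorem eq_univ_of_min {p : ℕ} [hp : Fact p.Prime] {X : Finset (ZMod p)} {m : ℕ}
    (h : min p m ≤ X.card) (hm : p ≤ m) : X = Finset.univ := by
  rw [← Finset.card_eq_iff_eq_univ]
  refine le_antisymm (Finset.card_le_univ _) ?_
  rw [ZMod.card]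
  rwa [min_eq_left hm] at h

theorem caseB {p : ℕ} [hp : Fact p.Prime] (h6 : 6000 < p) (B : Finset (ZMod p × ZMod p))
    (hcard : p + 2 ≤ B.card) (H : ℕ) (hfib : ∀ c, (B.filter (fun a => a.1 = c)).card ≤ H)
    (hH : 19 * H + 20 * (p / 100 + 1) ≤ p)
    (hS : ∑ a ∈ B, ((a.1.valMinAbs : ℤ) : ℝ) ^ 2 ≤ (p : ℝ) ^ 3 / 1230) : ¬ Good B := by
  classical
  intro hgood
  obtain ⟨b, hb, b', hb', hne⟩ := Finset.one_lt_card.1 (by omega : 1 < B.card)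
  set U := (B.erase b).erase b' with hU
  have hUB : U ⊆ B := (Finset.erase_subset _ _).trans (Finset.erase_subset _ _)
  have hUc : p ≤ U.card := by
    rw [hU, Finset.card_erase_of_mem (Finset.mem_erase.2 ⟨hne.symm, hb'⟩),
      Finset.card_erase_of_mem hb]
    omega
  obtain ⟨W, hWU, hWc, X, hX, hXr⟩ := groups U H
    (fun c => (Finset.card_le_card (Finset.filter_subset_filter _ hUB)).trans (hfib c))
    (p / 100 + 1) (by omega)
  have hXu : X = Finset.univ := eq_univ_of_min hX (by omega)
  have hU1c : (U \ W).card = U.card - 20 * (p / 100 + 1) := by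
    rw [Finset.card_sdiff_of_subset hWU, hWc]
  have hq := fiber_quadratic h6 (U \ W) (by omega) (by
    refine (Finset.sum_le_sum_of_subset_of_nonneg (Finset.sdiff_subset.trans hUB) ?_).trans hS
    intro _ _ _; positivity)
  obtain ⟨c, Y, hY, hYr⟩ := multi_fiber (U \ W) (Finset.univ : Finset (ZMod p))
  have hYu : Y = Finset.univ := eq_univ_of_min hY hq
  have hall : ∀ g, Reach U g := by
    intro g
    obtain ⟨y, hy⟩ := hXr (g.1 - c) (by rw [hXu]; exact Finset.mem_univ _)
    have h2 := hYr (g.2 - y) (by rw [hYu]; exact Finset.mem_univ _)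
    have h3 := hy.add (h2.mono (Finset.filter_subset _ _)) Finset.disjoint_sdiff
    have h4 : Reach U _ := h3.mono (Finset.union_subset hWU Finset.sdiff_subset)
    have : g = (g.1 - c, y) + (c, g.2 - y) := by ext <;> simp
    rw [this]; exact h4
  obtain ⟨S, hSU, hs⟩ := hall (-b)
  have hbS : b ∉ S := fun h => by
    have := hSU h
    simp [hU] at this
  have hbS' : b' ∉ S := fun h => by
    have := hSU h
    simp [hU] at this
  refine hgood (insert b S) ?_ ⟨b, Finset.mem_insert_self _ _⟩ ?_ ?_
  · exact Finset.insert_subset hb (hSU.trans hUB)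
  · intro h
    rw [← h] at hb'
    rcases Finset.mem_insert.1 hb' with h1 | h1
    · exact hne h1.symm
    · exact hbS' h1
  · rw [Finset.sum_insert hbS, hs]; simp

theorem gain {p : ℕ} [hp : Fact p.Prime] {G : Type*} [AddCommGroup G] [DecidableEq G]
    (f : G →+ ZMod p) (U : Finset G) (hU : ∀ a ∈ U, f a ≠ 0) :
    ∃ X : Finset (ZMod p), min p (U.card + 1) ≤ X.card ∧ ∀ x ∈ X, ∃ g, Reach U g ∧ f g = x := by
  induction U using Finset.induction_on with
  | empty => exact ⟨{0}, by simp, fun x hx => ⟨0, reach_zero _, by simp_all⟩⟩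
  | insert a U ha ih =>
    obtain ⟨X, hX, hXr⟩ := ih (fun b hb => hU b (Finset.mem_insert_of_mem hb))
    have hfa := hU a (Finset.mem_insert_self _ _)
    have h2 : ({0, f a} : Finset (ZMod p)).card = 2 := Finset.card_pair hfa.symm
    refine ⟨X + {0, f a}, ?_, ?_⟩
    · rw [Finset.card_insert_of_notMem ha]
      exact cd_le hX (by rw [h2]; exact min_le_right _ _)
    · intro x hx
      obtain ⟨y, hy, z, hz, rfl⟩ := Finset.mem_add.1 hx
      obtain ⟨g, hg, rfl⟩ := hXr y hy
      rcases Finset.mem_insert.1 hz with rfl | hz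
      · exact ⟨g, hg.mono (Finset.subset_insert _ _), by simp⟩
      · rw [Finset.mem_singleton] at hz
        subst hz
        refine ⟨g + a, ?_, by simp⟩
        have h3 : Reach {a} a := ⟨{a}, subset_rfl, by simp⟩
        refine (hg.add h3 (by simpa using ha)).mono ?_
        rw [Finset.union_comm]; rfl

theorem gain3 {p : ℕ} [hp : Fact p.Prime] {G : Type*} [AddCommGroup G] [DecidableEq G]
    (f : G →+ ZMod p) (U : Finset G) (hU : ∀ a ∈ U, f a ≠ 0 ∧ f a ≠ 1 ∧ f a ≠ -1) :
    ∃ X : Finset (ZMod p), min p (3 * U.card + 1) ≤ X.card ∧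
      ∀ x ∈ X, ∃ g, Reach U g ∧ ∃ i ≤ U.card, f g + (i : ZMod p) = x := by
  induction U using Finset.induction_on with
  | empty => exact ⟨{0}, by simp, fun x hx => ⟨0, reach_zero _, 0, by simp, by simp_all⟩⟩
  | insert a U ha ih =>
    obtain ⟨X, hX, hXr⟩ := ih (fun b hb => hU b (Finset.mem_insert_of_mem hb))
    obtain ⟨h0, h1, h2⟩ := hU a (Finset.mem_insert_self _ _)
    have hfa : ({0, 1, f a, f a + 1} : Finset (ZMod p)).card = 4 := by
      have e1 : (0 : ZMod p) ∉ ({1, f a, f a + 1} : Finset (ZMod p)) := by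
        simp only [Finset.mem_insert, Finset.mem_singleton, not_or]
        refine ⟨zero_ne_one, h0.symm, fun h => h2 (eq_neg_of_add_eq_zero_left h.symm)⟩
      have e2 : (1 : ZMod p) ∉ ({f a, f a + 1} : Finset (ZMod p)) := by
        simp only [Finset.mem_insert, Finset.mem_singleton, not_or]
        refine ⟨h1.symm, fun h => h0 (by simpa using h)⟩
      rw [Finset.card_insert_of_notMem e1, Finset.card_insert_of_notMem e2, Finset.card_pair]
      simp
    refine ⟨X + {0, 1, f a, f a + 1}, ?_, ?_⟩
    · rw [Finset.card_insert_of_notMem ha]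
      exact cd_le (b := 3) hX (by rw [hfa]; exact min_le_right _ _)
    · intro x hx
      obtain ⟨y, hy, z, hz, rfl⟩ := Finset.mem_add.1 hx
      obtain ⟨g, hg, i, hi, rfl⟩ := hXr y hy
      rw [Finset.card_insert_of_notMem ha]
      have h3 : Reach {a} a := ⟨{a}, subset_rfl, by simp⟩
      have h4 : Reach (insert a U) (g + a) := by
        refine (hg.add h3 (by simpa using ha)).mono ?_
        rw [Finset.union_comm]; rfl
      have h5 : Reach (insert a U) g := hg.mono (Finset.subset_insert _ _)
      simp only [Finset.mem_insert, Finset.mem_singleton] at hz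
      rcases hz with rfl | rfl | rfl | rfl
      · exact ⟨g, h5, i, by omega, by simp⟩
      · exact ⟨g, h5, i + 1, by omega, by push_cast; ring⟩
      · exact ⟨g + a, h4, i, by omega, by rw [_root_.map_add]; ring⟩
      · exact ⟨g + a, h4, i + 1, by omega, by rw [_root_.map_add]; push_cast; ring⟩

theorem cover {p : ℕ} [hp : Fact p.Prime] {B F : Finset (ZMod p × ZMod p)} (hgood : Good B)
    (hFB : F ⊆ B) (hF : ∀ a ∈ F, a.1 = 1) (j : ℕ) (hj0 : 0 < j) (hj : j < F.card) (b : ℕ)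
    (Z : Finset (ZMod p)) (hZ : min p (b + 1) ≤ Z.card) (c : ZMod p)
    (hZr : ∀ z ∈ Z, Reach (B \ F) (c, z)) (hjc : (j : ZMod p) + c = 0)
    (hb : p ≤ j * (F.card - j) + b + 1) : False := by
  classical
  obtain ⟨Y, hY, hYr⟩ := fiber_sums F 1 hF j hj.le
  have hu := eq_univ_of_min (cd_le hY hZ) hb
  have h0 : (0 : ZMod p) ∈ Y + Z := by rw [hu]; exact Finset.mem_univ _
  obtain ⟨y, hy, z, hz, hyz⟩ := Finset.mem_add.1 h0
  obtain ⟨S, hSF, hSc, hS⟩ := hYr y hy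
  obtain ⟨T, hT, hTs⟩ := hZr z hz
  have hd : Disjoint S T :=
    Finset.disjoint_of_subset_left hSF (Finset.disjoint_of_subset_right hT Finset.disjoint_sdiff)
  refine hgood (S ∪ T) (Finset.union_subset (hSF.trans hFB) (hT.trans Finset.sdiff_subset)) ?_ ?_ ?_
  · exact (Finset.card_pos.1 (by omega)).mono Finset.subset_union_left
  · intro h
    have : F ⊆ S := by
      intro x hx
      have hxB := hFB hx
      rw [← h] at hxB
      rcases Finset.mem_union.1 hxB with h1 | h1
      · exact h1
      · exact absurd hx (Finset.mem_sdiff.1 (hT h1)).2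
    have := Finset.card_le_card this
    omega
  · rw [Finset.sum_union hd, hS, hTs]
    ext
    · simpa using hjc
    · simpa using hyz

theorem greedy {α : Type*} [DecidableEq α] (O : Finset α) (f : α → ℕ) (M : ℕ)
    (hf : ∀ a ∈ O, f a ≤ M) (hO : M + 1 ≤ ∑ a ∈ O, f a) :
    ∃ T ⊆ O, M + 1 ≤ ∑ a ∈ T, f a ∧ ∑ a ∈ T, f a ≤ 2 * M := by
  induction O using Finset.induction_on with
  | empty => simp at hO
  | insert a O ha ih =>
    by_cases h : M + 1 ≤ ∑ a ∈ O, f a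
    · obtain ⟨T, hT, h1, h2⟩ := ih (fun b hb => hf b (Finset.mem_insert_of_mem hb)) h
      exact ⟨T, hT.trans (Finset.subset_insert _ _), h1, h2⟩
    · refine ⟨insert a O, subset_rfl, hO, ?_⟩
      rw [Finset.sum_insert ha]
      have := hf a (Finset.mem_insert_self _ _)
      omega

/-- Zero-sum free finite sets. -/
def ZSF {G : Type*} [AddCommMonoid G] (T : Finset G) : Prop :=
  ∀ S ⊆ T, S.Nonempty → ∑ x ∈ S, x ≠ 0

theorem line_sums {p : ℕ} [hp : Fact p.Prime] {B L : Finset (ZMod p × ZMod p)} (hgood : Good B)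
    (hLB : L ⊆ B) (hne : L ≠ B) (hL : ∀ a ∈ L, a.1 = 0) :
    ∃ Z : Finset (ZMod p), min p (L.card + 1) ≤ Z.card ∧ ∀ z ∈ Z, Reach L (0, z) := by
  classical
  obtain ⟨Z, hZ, hZr⟩ := gain (AddMonoidHom.snd (ZMod p) (ZMod p)) L (by
    intro a ha h0
    have hs : ({a} : Finset (ZMod p × ZMod p)) ≠ B := by
      intro h
      apply hne
      rw [← h] at hLB ⊢
      exact le_antisymm hLB (by simpa using ha)
    refine hgood {a} (by simpa using hLB ha) (by simp) hs ?_
    rw [Finset.sum_singleton]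
    exact Prod.ext (hL a ha) h0)
  refine ⟨Z, hZ, fun z hz => ?_⟩
  obtain ⟨g, ⟨S, hS, hg⟩, hgz⟩ := hZr z hz
  refine ⟨S, hS, ?_⟩
  rw [hg]
  refine Prod.ext ?_ hgz
  rw [← hg, Prod.fst_sum]
  exact Finset.sum_eq_zero fun a ha => hL a (hS ha)

theorem line_card {p : ℕ} [hp : Fact p.Prime] {B L : Finset (ZMod p × ZMod p)} (hgood : Good B)
    (hLB : L ⊆ B) (hne : L ≠ B) (hL : ∀ a ∈ L, a.1 = 0) (k : ℕ)
    (hk : ∀ T : Finset (ZMod p), ZSF T → T.card ≤ k) : L.card ≤ k := by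
  classical
  have hinj : Set.InjOn Prod.snd (L : Set (ZMod p × ZMod p)) := by
    intro a ha b hb hab
    exact Prod.ext ((hL a ha).trans (hL b hb).symm) hab
  rw [← Finset.card_image_of_injOn hinj]
  apply hk
  intro S hS hSn hs
  obtain ⟨T, hT, rfl⟩ := Finset.subset_image_iff.1 hS
  have hTL : T ⊆ L := by exact_mod_cast hT
  refine hgood T (hTL.trans hLB) (by simpa using hSn) ?_ ?_
  · intro h
    apply hne
    exact le_antisymm hLB (h ▸ hTL)
  · refine Prod.ext ?_ ?_
    · rw [Prod.fst_sum]
      exact Finset.sum_eq_zero fun a ha => hL a (hTL ha)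
    · rw [Finset.sum_image (hinj.mono hT)] at hs
      rw [Prod.snd_sum]; exact hs

theorem fiber_lt {p : ℕ} [hp : Fact p.Prime] (hp3 : 3 < p) {B F : Finset (ZMod p × ZMod p)}
    (hgood : Good B) (hFB : F ⊆ B) (hcard : p < B.card) (hF : ∀ a ∈ F, a.1 = 1) : F.card < p := by
  classical
  have hinj : Set.InjOn Prod.snd (F : Set (ZMod p × ZMod p)) := by
    intro a ha b hb hab
    exact Prod.ext ((hF a ha).trans (hF b hb).symm) hab
  have hc := Finset.card_image_of_injOn hinj
  have hle : (F.image Prod.snd).card ≤ p := by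
    simpa [ZMod.card] using Finset.card_le_univ (F.image Prod.snd)
  by_contra hcon
  have hFc : F.card = p := by omega
  have hu : F.image Prod.snd = Finset.univ := by
    rw [← Finset.card_eq_iff_eq_univ, ZMod.card]; omega
  refine hgood F hFB (Finset.card_pos.1 (by omega)) (fun h => by rw [h] at hFc; omega) ?_
  refine Prod.ext ?_ ?_
  · rw [Prod.fst_sum, Finset.sum_congr rfl hF]; simp [hFc]
  · rw [Prod.snd_sum, ← Finset.sum_image (f := fun x => x) hinj, hu]
    have := FiniteField.sum_pow_lt_card_sub_one (ZMod p) 1 (by rw [ZMod.card]; omega)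
    simpa using this

theorem caseA1 {p : ℕ} [hp : Fact p.Prime] {B : Finset (ZMod p × ZMod p)} (hgood : Good B)
    (w : ℕ) (hw : p ≤ 3 * w ^ 2) (hw1 : 1 ≤ w)
    (hF : 4 * w ≤ (B.filter (fun a => a.1 = 1)).card)
    (hx : 2 * w ≤ (B.filter (fun a => a.1 ≠ 0 ∧ a.1 ≠ 1 ∧ a.1 ≠ -1)).card)
    (hn : p ≤ (B.filter (fun a => a.1 ≠ 0)).card) (hhp : (B.filter (fun a => a.1 = 1)).card < p) :
    False := by
  classical
  set F := B.filter (fun a => a.1 = 1) with hFdef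
  set N := B.filter (fun a => a.1 ≠ 0) with hNdef
  have hFB : F ⊆ B := Finset.filter_subset _ _
  have hF1 : ∀ a ∈ F, a.1 = 1 := fun a ha => (Finset.mem_filter.1 ha).2
  obtain ⟨X3, hX3, hX3c⟩ := Finset.exists_subset_card_eq hx
  have hX3' : ∀ a ∈ X3, a ∈ B ∧ a.1 ≠ 0 ∧ a.1 ≠ 1 ∧ a.1 ≠ -1 := fun a ha =>
    Finset.mem_filter.1 (hX3 ha)
  have hFN : F ⊆ N := by
    intro a ha
    refine Finset.mem_filter.2 ⟨hFB ha, ?_⟩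
    rw [hF1 a ha]; exact one_ne_zero
  have hXN : X3 ⊆ N \ F := by
    intro a ha
    obtain ⟨h1, h2, h3, h4⟩ := hX3' a ha
    exact Finset.mem_sdiff.2 ⟨Finset.mem_filter.2 ⟨h1, h2⟩, fun h => h3 (hF1 a h)⟩
  set R := (N \ F) \ X3 with hR
  have hRc : R.card + 2 * w + F.card = N.card := by
    have h1 := Finset.card_sdiff_add_card_eq_card hFN
    have h2 : R.card + X3.card = (N \ F).card := Finset.card_sdiff_add_card_eq_card hXN
    omega
  obtain ⟨A, hA, hAr⟩ := gain3 (AddMonoidHom.fst (ZMod p) (ZMod p)) X3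
    (fun a ha => (hX3' a ha).2)
  obtain ⟨C, hC, hCr⟩ := gain (AddMonoidHom.fst (ZMod p) (ZMod p)) R (by
    intro a ha
    exact (Finset.mem_filter.1 (Finset.mem_sdiff.1 (Finset.mem_sdiff.1 ha).1).1).2)
  set I : Finset (ZMod p) := (Finset.Icc w (F.card - 3 * w)).image (fun n : ℕ => (n : ZMod p))
    with hI
  have hIc : I.card = F.card - 4 * w + 1 := by
    rw [hI, Finset.card_image_of_injOn]
    · rw [Nat.card_Icc]; omega
    · intro a ha b hb hab
      have ha := Finset.mem_Icc.1 ha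
      have hb := Finset.mem_Icc.1 hb
      have := (ZMod.natCast_eq_natCast_iff' a b p).1 hab
      rwa [Nat.mod_eq_of_lt (by omega), Nat.mod_eq_of_lt (by omega)] at this
  have hu := eq_univ_of_min (cd_le (cd_le (a := F.card - 4 * w) (by rw [hIc]; exact min_le_right _ _) hA)
    hC) (by omega)
  have h0 : (0 : ZMod p) ∈ I + A + C := by rw [hu]; exact Finset.mem_univ _
  obtain ⟨ia, hia, c, hc, hsum⟩ := Finset.mem_add.1 h0
  obtain ⟨i, hi, a, ha, rfl⟩ := Finset.mem_add.1 hia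
  obtain ⟨m, hm, rfl⟩ := Finset.mem_image.1 hi
  have hm := Finset.mem_Icc.1 hm
  obtain ⟨g, hg, i, hiX, rfl⟩ := hAr a ha
  obtain ⟨g', hg', rfl⟩ := hCr c hc
  have hr := hg.add hg' Finset.disjoint_sdiff
  have hsub : X3 ∪ R ⊆ B \ F := by
    refine Finset.union_subset (hXN.trans ?_) (Finset.sdiff_subset.trans ?_) <;>
    exact Finset.sdiff_subset_sdiff (Finset.filter_subset _ _) subset_rfl
  refine cover hgood hFB hF1 (m + i) (by omega) (by omega) 0 {(g + g').2} (by simp) (g + g').1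
    ?_ ?_ ?_
  · intro z hz
    rw [Finset.mem_singleton.1 hz]
    exact hr.mono hsub
  · simp only [AddMonoidHom.coe_fst] at hsum
    rw [← hsum, Prod.fst_add]; push_cast; ring
  · obtain ⟨d, hd⟩ := Nat.exists_eq_add_of_le (by omega : w ≤ m + i)
    obtain ⟨e, he⟩ := Nat.exists_eq_add_of_le (by omega : w ≤ F.card - (m + i))
    have h2w : 2 * w ≤ d + e := by omega
    rw [he, hd]
    nlinarith

theorem arith_aux {p d e : ℕ} (h : p ≤ 2 * (d + e) + 5) : p ≤ (2 + d) * (2 + e) + 0 + 1 := by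
  nlinarith [Nat.zero_le (d * e)]

set_option maxHeartbeats 1600000 in
theorem caseA {p : ℕ} [hp : Fact p.Prime] {B : Finset (ZMod p × ZMod p)} (hgood : Good B)
    (k : ℕ) (hk : ∀ T : Finset (ZMod p), ZSF T → T.card ≤ k) (hcard : B.card = p + k)
    (w : ℕ) (hwk : 2 * w ≤ k) (hw : p ≤ 3 * w ^ 2) (hw1 : 1 ≤ w) (hpw : 8 * w + 10 ≤ p)
    (hF : 4 * w ≤ (B.filter (fun a => a.1 = 1)).card) : False := by
  classical
  set F := B.filter (fun a => a.1 = 1) with hFdef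
  set L := B.filter (fun a => a.1 = 0) with hLdef
  set M := B.filter (fun a => a.1 = -1) with hMdef
  set O := B.filter (fun a => a.1 ≠ 0 ∧ a.1 ≠ 1 ∧ a.1 ≠ -1) with hOdef
  have hFB : F ⊆ B := Finset.filter_subset _ _
  have hLB : L ⊆ B := Finset.filter_subset _ _
  have hMB : M ⊆ B := Finset.filter_subset _ _
  have hOB : O ⊆ B := Finset.filter_subset _ _
  have hF1 : ∀ a ∈ F, a.1 = 1 := fun a ha => (Finset.mem_filter.1 ha).2
  have hL1 : ∀ a ∈ L, a.1 = 0 := fun a ha => (Finset.mem_filter.1 ha).2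
  have hM1 : ∀ a ∈ M, a.1 = -1 := fun a ha => (Finset.mem_filter.1 ha).2
  have hO1 : ∀ a ∈ O, a.1 ≠ 0 ∧ a.1 ≠ 1 ∧ a.1 ≠ -1 := fun a ha => (Finset.mem_filter.1 ha).2
  have h10 : (1 : ZMod p) ≠ 0 := one_ne_zero
  have h1m : (1 : ZMod p) ≠ -1 := by
    intro h
    have h2 : ((2 : ℕ) : ZMod p) = 0 := by
      have : (1 : ZMod p) + 1 = 0 := by nth_rewrite 1 [h]; ring
      push_cast; rw [← this]; norm_num
    rw [ZMod.natCast_eq_zero_iff] at h2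
    have := Nat.le_of_dvd (by norm_num) h2
    omega
  have hm0 : (-1 : ZMod p) ≠ 0 := neg_ne_zero.2 h10
  have hLne : L ≠ B := by
    intro h
    obtain ⟨a, ha⟩ := Finset.card_pos.1 (by omega : 0 < F.card)
    have h1 := hF1 a ha
    have h2 := hL1 a (h ▸ hFB ha)
    exact h10 (h1.symm.trans h2)
  have hdLF : Disjoint L F := Finset.disjoint_left.2 fun a ha hb =>
    h10 ((hF1 a hb).symm.trans (hL1 a ha))
  have hdLM : Disjoint L M := Finset.disjoint_left.2 fun a ha hb =>
    hm0 ((hM1 a hb).symm.trans (hL1 a ha))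
  have hdMF : Disjoint M F := Finset.disjoint_left.2 fun a ha hb =>
    h1m ((hF1 a hb).symm.trans (hM1 a ha))
  have hdOF : Disjoint O F := Finset.disjoint_left.2 fun a ha hb => (hO1 a ha).2.1 (hF1 a hb)
  have hdOL : Disjoint O L := Finset.disjoint_left.2 fun a ha hb => (hO1 a ha).1 (hL1 a hb)
  have hdOM : Disjoint O M := Finset.disjoint_left.2 fun a ha hb => (hO1 a ha).2.2 (hM1 a hb)
  have hLF : L ⊆ B \ F := Finset.subset_sdiff.2 ⟨hLB, hdLF⟩
  have hMF : M ⊆ B \ F := Finset.subset_sdiff.2 ⟨hMB, hdMF⟩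
  have hOF : O ⊆ B \ F := Finset.subset_sdiff.2 ⟨hOB, hdOF⟩
  have hsplit : F.card + L.card + M.card + O.card = p + k := by
    rw [← hcard]
    have hB : B = ((F ∪ L) ∪ M) ∪ O := by
      ext a
      simp only [hFdef, hLdef, hMdef, hOdef, Finset.mem_union, Finset.mem_filter]
      tauto
    conv_rhs => rw [hB]
    rw [Finset.card_union_of_disjoint, Finset.card_union_of_disjoint, Finset.card_union_of_disjoint hdLF.symm]
    · rw [Finset.disjoint_union_left]; exact ⟨hdMF.symm, hdLM⟩
    · rw [Finset.disjoint_union_left, Finset.disjoint_union_left]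
      exact ⟨⟨hdOF.symm, hdOL.symm⟩, hdOM.symm⟩
  have ht := line_card hgood hLB hLne hL1 k hk
  obtain ⟨Z, hZ, hZr⟩ := line_sums hgood hLB hLne hL1
  have hhp := fiber_lt (by omega) hgood hFB (by omega) hF1
  by_cases hx : 2 * w ≤ O.card
  · refine caseA1 hgood w hw hw1 hF hx ?_ hhp
    have : L.card + (B.filter (fun a => a.1 ≠ 0)).card = B.card :=
      Finset.card_filter_add_card_filter_not (s := B) (fun a => a.1 = 0)
    omega
  push Not at hx
  rcases Nat.lt_or_ge M.card 1 with hy | hy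
  · -- no element with first coordinate -1
    have hhF : p < F.card + 2 * w := by omega
    have hval : ∀ a ∈ O, 2 ≤ a.1.val ∧ a.1.val + 2 ≤ p := by
      intro a ha
      obtain ⟨h0, h1, h2⟩ := hO1 a ha
      have hlt := ZMod.val_lt a.1
      refine ⟨?_, ?_⟩
      · by_contra hcon
        have : a.1.val = 0 ∨ a.1.val = 1 := by omega
        rcases this with h | h
        · exact h0 ((ZMod.val_eq_zero _).1 h)
        · apply h1
          rw [← ZMod.natCast_zmod_val a.1, h]; simp
      · by_contra hcon
        apply h2
        have h3 : a.1.val + 1 = p := by omega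
        have h4 : ((a.1.val + 1 : ℕ) : ZMod p) = 0 := by rw [h3]; simp
        push_cast at h4
        rw [ZMod.natCast_zmod_val] at h4
        exact eq_neg_of_add_eq_zero_left h4
    have hfin : ∀ T ⊆ O, ¬ (p - F.card + 2 ≤ ∑ a ∈ T, a.1.val ∧ ∑ a ∈ T, a.1.val + 2 ≤ p) := by
      rintro T hT ⟨h1, h2⟩
      have hr : Reach (B \ F) (∑ a ∈ T, a) := ⟨T, hT.trans hOF, rfl⟩
      have hT1 : (∑ a ∈ T, a).1 = ((∑ a ∈ T, a.1.val : ℕ) : ZMod p) := by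
        rw [Prod.fst_sum]; push_cast
        exact Finset.sum_congr rfl fun a _ => (ZMod.natCast_zmod_val a.1).symm
      set s := ∑ a ∈ T, a.1.val with hs
      refine cover hgood hFB hF1 (p - s) (by omega) (by omega) 0 {(∑ a ∈ T, a).2} (by simp)
        (∑ a ∈ T, a).1 ?_ ?_ ?_
      · intro z hz
        rw [Finset.mem_singleton.1 hz]; exact hr
      · rw [hT1, ← Nat.cast_add, Nat.sub_add_cancel (by omega)]; simp
      · obtain ⟨d, hd⟩ := Nat.exists_eq_add_of_le (by omega : 2 ≤ p - s)
        obtain ⟨e, he⟩ := Nat.exists_eq_add_of_le (by omega : 2 ≤ F.card - (p - s))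
        have h2w : p ≤ 2 * (d + e) + 5 := by omega
        rw [he, hd]
        exact arith_aux h2w
    have hsmall : ∀ a ∈ O, a.1.val ≤ p - F.card + 1 := by
      intro a ha
      by_contra hcon
      refine hfin {a} (by simpa using ha) ?_
      rw [Finset.sum_singleton]
      have := hval a ha
      omega
    have htot : ∑ a ∈ O, a.1.val ≤ p - F.card + 1 := by
      by_contra hcon
      obtain ⟨T, hT, h1, h2⟩ := greedy O (fun a => a.1.val) _ hsmall (by omega)
      exact hfin T hT ⟨by omega, by omega⟩
    have h2x : O.card * 2 ≤ ∑ a ∈ O, a.1.val := by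
      rw [← smul_eq_mul]
      exact Finset.card_nsmul_le_sum _ _ _ fun a ha => (hval a ha).1
    have hO1c : O.card = 1 := by omega
    obtain ⟨a, haO⟩ := Finset.card_eq_one.1 hO1c
    have ha : a ∈ O := by rw [haO]; simp
    have hva : a.1.val = 2 := by
      have := (hval a ha).1
      rw [haO, Finset.sum_singleton] at htot
      omega
    have ha1 : a.1 = 2 := by rw [← ZMod.natCast_zmod_val a.1, hva]; simp
    refine cover hgood hFB hF1 (p - 2) (by omega) (by omega) L.card (Z.image (fun z => a.2 + z))
      (by rwa [Finset.card_image_of_injective _ (add_right_injective _)]) 2 ?_ ?_ ?_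
    · intro z hz
      obtain ⟨z, hz', rfl⟩ := Finset.mem_image.1 hz
      have h3 : Reach O a := ⟨{a}, by simpa using ha, by simp⟩
      have h4 := (h3.add (hZr z hz') hdOL).mono (Finset.union_subset hOF hLF)
      have : ((2 : ZMod p), a.2 + z) = a + (0, z) := by ext <;> simp [ha1]
      rw [this]; exact h4
    · have : ((p - 2 : ℕ) : ZMod p) + ((2 : ℕ) : ZMod p) = 0 := by
        rw [← Nat.cast_add, Nat.sub_add_cancel (by omega)]; simp
      simpa using this
    · have : F.card - (p - 2) = 1 := by omega
      rw [this]; omega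
  rcases Nat.lt_or_ge M.card 2 with hy2 | hy2
  · -- exactly one element with first coordinate -1
    have hM1c : M.card = 1 := by omega
    obtain ⟨a, haM⟩ := Finset.card_eq_one.1 hM1c
    have ha : a ∈ M := by rw [haM]; simp
    have ha1 := hM1 a ha
    refine cover hgood hFB hF1 1 (by omega) (by omega) L.card (Z.image (fun z => a.2 + z))
      (by rwa [Finset.card_image_of_injective _ (add_right_injective _)]) (-1) ?_ (by simp) (by omega)
    intro z hz
    obtain ⟨z, hz', rfl⟩ := Finset.mem_image.1 hz
    have h3 : Reach M a := ⟨{a}, by simpa using ha, by simp⟩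
    have h4 := (h3.add (hZr z hz') hdLM.symm).mono (Finset.union_subset hMF hLF)
    have : ((-1 : ZMod p), a.2 + z) = a + (0, z) := by ext <;> simp [ha1]
    rw [this]; exact h4
  · obtain ⟨Y, hY, hYr⟩ := fiber_sums M (-1) hM1 2 hy2
    refine cover hgood hFB hF1 2 (by omega) (by omega) (2 * (M.card - 2)) Y hY
      (((2 : ℕ) : ZMod p) * (-1)) ?_ (by simp) (by omega)
    intro z hz
    obtain ⟨S, hS, _, hs⟩ := hYr z hz
    exact ⟨S, hS.trans hMF, hs⟩

theorem Good.image {G H : Type*} [AddCommMonoid G] [AddCommMonoid H] [DecidableEq H]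
    {B : Finset G} (hB : Good B) (f : G →+ H) (hf : Function.Injective f) : Good (B.image f) := by
  classical
  intro S hS hSn hne hs
  obtain ⟨T, hT, rfl⟩ := Finset.subset_image_iff.1 hS
  have hTB : T ⊆ B := by exact_mod_cast hT
  refine hB T hTB (by simpa using hSn) (fun h => hne (by rw [h])) ?_
  rw [Finset.sum_image (fun a _ b _ h => hf h), ← map_sum] at hs
  exact hf (by rw [hs, _root_.map_zero])

theorem good_count {G : Type*} [AddCommMonoid G] [DecidableEq G] {B : Finset G} (hB : Good B) :
    (B.powerset.filter (fun S => ∑ x ∈ S, x = 0)).card ≤ 2 := by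
  refine (Finset.card_le_card (t := {∅, B}) ?_).trans Finset.card_le_two
  intro S hS
  rw [Finset.mem_filter, Finset.mem_powerset] at hS
  by_contra hcon
  simp only [Finset.mem_insert, Finset.mem_singleton, not_or] at hcon
  exact hB S hS.1 (Finset.nonempty_iff_ne_empty.2 hcon.1) hcon.2 hS.2

theorem exists_coord {p : ℕ} [hp : Fact p.Prime] (u v : ZMod p) (huv : u ≠ 0 ∨ v ≠ 0) :
    ∃ f : ZMod p × ZMod p →+ ZMod p × ZMod p, Function.Injective f ∧
      ∀ a, (f a).1 = u * a.1 + v * a.2 := by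
  by_cases hu : u = 0
  · have hv : v ≠ 0 := huv.resolve_left (fun h => h hu)
    refine ⟨AddMonoidHom.mk' (fun a => (u * a.1 + v * a.2, a.1)) ?_, ?_, fun a => rfl⟩
    · intro a b; ext
      · simp; ring
      · simp
    · intro a b hab
      simp only [AddMonoidHom.mk'_apply, Prod.mk.injEq] at hab
      obtain ⟨h1, h2⟩ := hab
      rw [h2] at h1
      exact Prod.ext h2 (mul_left_cancel₀ hv (add_left_cancel h1))
  · refine ⟨AddMonoidHom.mk' (fun a => (u * a.1 + v * a.2, a.2)) ?_, ?_, fun a => rfl⟩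
    · intro a b; ext
      · simp; ring
      · simp
    · intro a b hab
      simp only [AddMonoidHom.mk'_apply, Prod.mk.injEq] at hab
      obtain ⟨h1, h2⟩ := hab
      rw [h2] at h1
      exact Prod.ext (mul_left_cancel₀ hu (add_right_cancel h1)) h2

theorem zsf_interval {p : ℕ} (w : ℕ) (hw : w * (2 * w + 1) < p) :
    ∃ T : Finset (ZMod p), ZSF T ∧ T.card = 2 * w := by
  classical
  have hinj : Set.InjOn (fun n : ℕ => (n : ZMod p)) (Finset.Icc 1 (2 * w) : Set ℕ) := by
    intro a ha b hb hab
    have ha := Finset.mem_Icc.1 (Finset.mem_coe.1 ha)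
    have hb := Finset.mem_Icc.1 (Finset.mem_coe.1 hb)
    have := (ZMod.natCast_eq_natCast_iff' a b p).1 hab
    rwa [Nat.mod_eq_of_lt (by nlinarith), Nat.mod_eq_of_lt (by nlinarith)] at this
  refine ⟨(Finset.Icc 1 (2 * w)).image (fun n : ℕ => (n : ZMod p)), ?_, ?_⟩
  · intro S hS hSn hs
    obtain ⟨T, hT, rfl⟩ := Finset.subset_image_iff.1 hS
    rw [Finset.sum_image (hinj.mono hT), ← Nat.cast_sum, ZMod.natCast_eq_zero_iff] at hs
    have hTB : T ⊆ Finset.Icc 1 (2 * w) := by exact_mod_cast hT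
    have h1 : ∑ x ∈ T, x ≤ w * (2 * w + 1) := by
      refine (Finset.sum_le_sum_of_subset (t := Finset.range (2 * w + 1)) ?_).trans ?_
      · intro x hx
        have := Finset.mem_Icc.1 (hTB hx)
        exact Finset.mem_range.2 (by omega)
      · have := Finset.sum_range_id_mul_two (2 * w + 1)
        simp only [Nat.add_sub_cancel] at this
        nlinarith
    obtain ⟨t, ht⟩ : T.Nonempty := by simpa using hSn
    have h2 : t ≤ ∑ x ∈ T, x := Finset.single_le_sum (f := fun x => x) (fun _ _ => Nat.zero_le _) ht
    have h3 := (Finset.mem_Icc.1 (hTB ht)).1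
    have := Nat.le_of_dvd (by omega) hs
    omega
  · rw [Finset.card_image_of_injOn hinj]; simp

/-- The core statement. -/
theorem core {p : ℕ} [hp : Fact p.Prime] (h6 : 6000 < p) (k : ℕ)
    (hk : ∀ T : Finset (ZMod p), ZSF T → T.card ≤ k) (B : Finset (ZMod p × ZMod p))
    (hcard : B.card = p + k) : ¬ Good B := by
  classical
  intro hgood
  obtain ⟨v, hv⟩ : ∃ v, v = Nat.sqrt (p / 3) := ⟨_, rfl⟩
  have hv1 : 3 * (v * v) ≤ p := by
    have := Nat.sqrt_le (p / 3); rw [← hv] at this; omega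
  have hv2 : p < 3 * ((v + 1) * (v + 1)) := by
    have := Nat.lt_succ_sqrt (p / 3); rw [← hv] at this
    simp only [Nat.succ_eq_add_one] at this
    omega
  have hv3 : 40 ≤ v := by
    by_contra hcon
    have : (v + 1) * (v + 1) ≤ 40 * 40 := Nat.mul_le_mul (by omega) (by omega)
    omega
  set w := v + 1 with hw
  have hwp : w * (2 * w + 1) < p := by rw [hw]; nlinarith
  obtain ⟨T, hT, hTc⟩ := zsf_interval (p := p) w hwp
  have hwk : 2 * w ≤ k := hTc ▸ hk T hT
  have h76 : 380 * w + 100 ≤ 4 * p := by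
    rw [hw]
    have h1 : (3 : ℤ) * (v * v) ≤ p := by exact_mod_cast hv1
    have h2 : (6000 : ℤ) < p := by exact_mod_cast h6
    zify
    nlinarith [sq_nonneg ((v : ℤ) - 32)]
  have hH : 19 * (4 * w) + 20 * (p / 100 + 1) ≤ p := by omega
  have hpw : 8 * w + 10 ≤ p := by omega
  have hw3 : p ≤ 3 * w ^ 2 := by rw [sq]; omega
  obtain ⟨u, v', huv, hsum⟩ := fourier_main h6 B (by omega) (by convert good_count hgood)
  obtain ⟨f, hf, hf1⟩ := exists_coord u v' huv
  set B' := B.image f with hB'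
  have hgood' : Good B' := hgood.image f hf
  have hcard' : B'.card = p + k := by rw [hB', Finset.card_image_of_injective _ hf, hcard]
  have hsum' : ∑ a ∈ B', ((a.1.valMinAbs : ℤ) : ℝ) ^ 2 ≤ (p : ℝ) ^ 3 / 1230 := by
    rw [hB', Finset.sum_image (fun a _ b _ h => hf h)]
    simp only [hf1]; exact hsum
  by_cases hfib : ∀ c, (B'.filter (fun a => a.1 = c)).card ≤ 4 * w
  · exact caseB h6 B' (by omega) (4 * w) hfib hH hsum' hgood'
  push Not at hfib
  obtain ⟨c, hc⟩ := hfib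
  by_cases hc0 : c = 0
  · obtain ⟨Y, hY, hYr⟩ := fiber_sums (B'.filter (fun a => a.1 = c)) c
      (fun a ha => (Finset.mem_filter.1 ha).2) w (by omega)
    have hYu : Y = Finset.univ := by
      refine eq_univ_of_min hY ?_
      obtain ⟨d, hd⟩ := Nat.exists_eq_add_of_le
        (by omega : 3 * w ≤ (B'.filter (fun a => a.1 = c)).card - w)
      rw [hd]; nlinarith
    obtain ⟨S, hS, hSc, hs⟩ := hYr 0 (by rw [hYu]; exact Finset.mem_univ _)
    refine hgood' S (hS.trans (Finset.filter_subset _ _)) (Finset.card_pos.1 (by omega)) ?_ ?_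
    · intro h
      have := Finset.card_le_card (Finset.filter_subset (fun a : ZMod p × ZMod p => a.1 = c) B')
      rw [← h] at this
      have h2 : (S.filter (fun a => a.1 = c)).card > 4 * w := by rw [h]; exact hc
      omega
    · rw [hs, hc0]; simp
  · obtain ⟨g, hg, hg1⟩ : ∃ g : ZMod p × ZMod p →+ ZMod p × ZMod p, Function.Injective g ∧
      ∀ a, (g a).1 = c⁻¹ * a.1 + 0 * a.2 := exists_coord c⁻¹ 0 (Or.inl (inv_ne_zero hc0))
    refine caseA (hgood'.image g hg) k hk (by rw [Finset.card_image_of_injective _ hg, hcard'])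
      w hwk hw3 (by omega) hpw ?_
    rw [Finset.filter_image, Finset.card_image_of_injective _ hg]
    refine hc.le.trans (Finset.card_le_card ?_)
    intro a ha
    rw [Finset.mem_filter] at ha ⊢
    refine ⟨ha.1, ?_⟩
    rw [hg1, ha.2, inv_mul_cancel₀ hc0]; ring

theorem cmul_eq {G : Type*} [AddCommMonoid G] [DecidableEq G] (S : Multiset G) :
    cmul 1 S = ∑ g ∈ S.toFinset, (S.count g - 1) := by
  unfold cmul
  congr!

theorem cmul_of_nodup {G : Type*} [AddCommMonoid G] {S : Multiset G} (h : S.Nodup) :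
    cmul 1 S = 0 := by
  classical
  rw [cmul_eq]
  refine Finset.sum_eq_zero fun g _ => ?_
  have := Multiset.nodup_iff_count_le_one.1 h g
  omega

theorem nodup_of_cmul {G : Type*} [AddCommMonoid G] {S : Multiset G} (h : cmul 1 S ≤ 0) :
    S.Nodup := by
  classical
  rw [cmul_eq, Nat.le_zero, Finset.sum_eq_zero_iff] at h
  rw [Multiset.nodup_iff_count_le_one]
  intro a
  by_cases ha : a ∈ S
  · have := h a (Multiset.mem_toFinset.2 ha); omega
  · rw [Multiset.count_eq_zero_of_notMem ha]; omega

theorem erase_of_cmul {G : Type*} [AddCommMonoid G] [DecidableEq G] {S : Multiset G} (h0 : S ≠ 0)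
    (h : cmul 1 S ≤ 1) : ∃ a ∈ S, (S.erase a).Nodup := by
  by_cases hn : S.Nodup
  · obtain ⟨a, ha⟩ := Multiset.exists_mem_of_ne_zero h0
    exact ⟨a, ha, hn.erase a⟩
  · rw [cmul_eq] at h
    rw [Multiset.nodup_iff_count_le_one] at hn
    push Not at hn
    obtain ⟨a, ha⟩ := hn
    have haS : a ∈ S := Multiset.count_pos.1 (by omega)
    refine ⟨a, haS, ?_⟩
    rw [Multiset.nodup_iff_count_le_one]
    rw [← Finset.add_sum_erase _ _ (Multiset.mem_toFinset.2 haS)] at h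
    intro b
    by_cases hb : b = a
    · subst hb
      rw [Multiset.count_erase_self]
      omega
    · rw [Multiset.count_erase_of_ne hb]
      by_cases hbS : b ∈ S
      · have h2 : S.count b - 1 ≤ ∑ g ∈ S.toFinset.erase a, (S.count g - 1) :=
          Finset.single_le_sum (f := fun g => S.count g - 1) (fun _ _ => Nat.zero_le _)
            (Finset.mem_erase.2 ⟨hb, Multiset.mem_toFinset.2 hbS⟩)
        omega
      · rw [Multiset.count_eq_zero_of_notMem hbS]; omega

theorem cmul_cons {G : Type*} [AddCommMonoid G] (a : G) (A : Finset G) :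
    cmul 1 (a ::ₘ A.val) ≤ 1 := by
  classical
  rw [cmul_eq]
  have : ∀ g ∈ (a ::ₘ A.val).toFinset, (a ::ₘ A.val).count g - 1 ≤ if g = a then 1 else 0 := by
    intro g _
    have := Multiset.nodup_iff_count_le_one.1 A.nodup g
    rw [Multiset.count_cons]
    split_ifs <;> omega
  refine (Finset.sum_le_sum this).trans ?_
  rw [Finset.sum_ite_eq']
  split_ifs <;> omega

theorem minimal_cons {G : Type*} [AddCommGroup G] {A : Finset G} (hA : ZSF A) :
    IsMinimalZeroSum ((-(∑ x ∈ A, x)) ::ₘ A.val) := by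
  classical
  have hsum : ∀ T : Finset G, T.val.sum = ∑ x ∈ T, x := fun T => by
    rw [Finset.sum, Multiset.map_id']
  refine ⟨Multiset.cons_ne_zero, ?_, ?_⟩
  · rw [Multiset.sum_cons, hsum]; simp
  intro T hT hT0 hTS hs
  set a := -(∑ x ∈ A, x) with ha
  by_cases haT : a ∈ T
  · have h1 : T.erase a ≤ A.val := Multiset.erase_le_iff_le_cons.2 hT
    have hnd : (T.erase a).Nodup := Multiset.nodup_of_le h1 A.nodup
    let E : Finset G := ⟨T.erase a, hnd⟩
    have hE : E ⊆ A := Finset.val_le_iff.1 h1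
    rw [← Multiset.cons_erase haT, Multiset.sum_cons] at hs
    have hEs : ∑ x ∈ E, x = ∑ x ∈ A, x := by
      rw [← hsum E]
      have : (T.erase a).sum = -a := (neg_eq_of_add_eq_zero_right hs).symm
      rw [show E.val = T.erase a from rfl, this, ha, neg_neg]
    have h2 : ∑ x ∈ A \ E, x = 0 := by
      have := Finset.sum_sdiff (f := fun x => x) hE
      rw [hEs] at this
      simpa using this
    have h3 : A \ E = ∅ := by
      by_contra hne
      exact hA _ Finset.sdiff_subset (Finset.nonempty_iff_ne_empty.2 hne) h2
    have h4 : E = A := le_antisymm hE (Finset.sdiff_eq_empty_iff_subset.1 h3)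
    apply hTS
    rw [← Multiset.cons_erase haT, ← h4]
  · have h1 : T ≤ A.val := (Multiset.le_cons_of_notMem haT).1 hT
    have hnd : T.Nodup := Multiset.nodup_of_le h1 A.nodup
    let E : Finset G := ⟨T, hnd⟩
    have hE : E ⊆ A := Finset.val_le_iff.1 h1
    refine hA E hE ?_ ((hsum E).symm.trans hs)
    rw [Finset.nonempty_iff_ne_empty]
    intro h
    exact hT0 (congrArg Finset.val h)

theorem upper_aux {p : ℕ} [hp : Fact p.Prime] (h6 : 6000 < p) (k : ℕ)
    (hk : ∀ T : Finset (ZMod p), ZSF T → T.card ≤ k) {S R : Multiset (ZMod p × ZMod p)}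
    (hS : IsMinimalZeroSum S) (hR : R ≤ S) (hnd : R.Nodup) : Multiset.card R < p + k := by
  by_contra hcon
  push Not at hcon
  let A : Finset (ZMod p × ZMod p) := ⟨R, hnd⟩
  obtain ⟨B, hBA, hBc⟩ := Finset.exists_subset_card_eq (s := A) hcon
  refine core h6 k hk B hBc ?_
  intro T hTB hTn hTne hs
  have hlt : T.card < B.card := Finset.card_lt_card ⟨hTB, fun h => hTne (le_antisymm hTB h)⟩
  have h1 : T.val ≤ S := (Finset.val_le_iff.2 (hTB.trans hBA)).trans hR
  refine hS.2.2 T.val h1 ?_ ?_ ?_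
  · intro h
    rw [Finset.val_eq_zero] at h
    exact Finset.nonempty_iff_ne_empty.1 hTn h
  · intro h
    have h2 : T.card = Multiset.card S := by rw [← h]; rfl
    have := Multiset.card_le_card hR
    omega
  · rw [← hs, Finset.sum, Multiset.map_id']

theorem lower_aux {p : ℕ} [hp : Fact p.Prime] (T P : Finset (ZMod p)) (hT : ZSF T)
    (hP : P.card < p) : ∃ A : Finset (ZMod p × ZMod p), ZSF A ∧ A.card = T.card + P.card ∧
      (∀ a ∈ A, a.1 = 0 ∨ a.1 = 1) ∧ (∑ a ∈ A, a).1 = (P.card : ZMod p) := by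
  classical
  set L := T.image (fun t => ((0 : ZMod p), t)) with hL
  set F := P.image (fun t => ((1 : ZMod p), t)) with hF
  have hi0 : Function.Injective (fun t : ZMod p => ((0 : ZMod p), t)) := Prod.mk_right_injective 0
  have hi1 : Function.Injective (fun t : ZMod p => ((1 : ZMod p), t)) := Prod.mk_right_injective 1
  have hL1 : ∀ a ∈ L, a.1 = 0 := by
    intro a ha
    obtain ⟨t, _, rfl⟩ := Finset.mem_image.1 ha
    rfl
  have hF1 : ∀ a ∈ F, a.1 = 1 := by
    intro a ha
    obtain ⟨t, _, rfl⟩ := Finset.mem_image.1 ha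
    rfl
  have hd : Disjoint L F := Finset.disjoint_left.2 fun a ha hb =>
    one_ne_zero ((hF1 a hb).symm.trans (hL1 a ha))
  have hLc : L.card = T.card := Finset.card_image_of_injective _ hi0
  have hFc : F.card = P.card := Finset.card_image_of_injective _ hi1
  have hfst : ∀ S ⊆ L ∪ F, (∑ a ∈ S, a).1 = ((S ∩ F).card : ZMod p) := by
    intro S hS
    rw [Prod.fst_sum]
    have : ∀ a ∈ S, a.1 = if a ∈ F then (1 : ZMod p) else 0 := by
      intro a ha
      split_ifs with h
      · exact hF1 a h
      · exact hL1 a ((Finset.mem_union.1 (hS ha)).resolve_right h)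
    rw [Finset.sum_congr rfl this, Finset.sum_ite_mem]
    simp
  refine ⟨L ∪ F, ?_, ?_, ?_, ?_⟩
  · intro S hS hSn hs
    have h1 := hfst S hS
    rw [hs] at h1
    have h2 : (S ∩ F).card ≤ F.card := Finset.card_le_card Finset.inter_subset_right
    have h3 : (S ∩ F).card = 0 := by
      have h4 : ((S ∩ F).card : ZMod p) = 0 := h1.symm
      rw [ZMod.natCast_eq_zero_iff] at h4
      exact Nat.eq_zero_of_dvd_of_lt h4 (by omega)
    have hSL : S ⊆ L := by
      intro a ha
      refine (Finset.mem_union.1 (hS ha)).resolve_right fun h => ?_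
      have := Finset.mem_inter.2 ⟨ha, h⟩
      rw [Finset.card_eq_zero.1 h3] at this
      simp at this
    obtain ⟨Q, hQ, rfl⟩ := Finset.subset_image_iff.1 hSL
    refine hT Q (by exact_mod_cast hQ) (by simpa using hSn) ?_
    rw [Finset.sum_image (fun a _ b _ h => hi0 h)] at hs
    have := congrArg Prod.snd hs
    rwa [Prod.snd_sum] at this
  · rw [Finset.card_union_of_disjoint hd, hLc, hFc]
  · intro a ha
    exact (Finset.mem_union.1 ha).imp (hL1 a) (hF1 a)
  · rw [hfst _ subset_rfl, Finset.inter_eq_right.2 Finset.subset_union_right, hFc]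

/-- For a prime `p > 6000`, `SD(C_p ⊕ C_p) = Ol(C_p ⊕ C_p) − 1`. -/
theorem SD_eq_Ol_sub_one_of_large_prime (p : ℕ) (hp : p.Prime) (h : 6000 < p) :
    SD (ZMod p × ZMod p) = Ol (ZMod p × ZMod p) - 1 := by
  classical
  haveI : Fact p.Prime := ⟨hp⟩
  obtain ⟨T, hT, hmax⟩ := Finset.exists_max_image
    ((Finset.univ : Finset (Finset (ZMod p))).filter (fun T => ZSF T)) Finset.card
    ⟨∅, by
      rw [Finset.mem_filter]
      refine ⟨Finset.mem_univ _, fun S hS hSn => ?_⟩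
      rw [Finset.subset_empty.1 hS] at hSn
      exact absurd hSn (by simp)⟩
  have hTz : ZSF T := (Finset.mem_filter.1 hT).2
  have hk : ∀ T' : Finset (ZMod p), ZSF T' → T'.card ≤ T.card := fun T' hT' =>
    hmax T' (Finset.mem_filter.2 ⟨Finset.mem_univ _, hT'⟩)
  have hOl : Ol (ZMod p × ZMod p) = p + T.card := by
    refine IsGreatest.csSup_eq ⟨?_, ?_⟩
    · obtain ⟨P, -, hP⟩ := Finset.exists_subset_card_eq
        (s := (Finset.univ : Finset (ZMod p))) (n := p - 1)
        (by rw [Finset.card_univ, ZMod.card]; omega)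
      obtain ⟨A, hA, hAc, -, -⟩ := lower_aux T P hTz (by omega)
      refine ⟨_, minimal_cons hA, cmul_cons _ _, ?_⟩
      rw [Multiset.card_cons, Finset.card_val, hAc, hP]; omega
    · rintro m ⟨S, hS, hc, rfl⟩
      obtain ⟨a, ha, hnd⟩ := erase_of_cmul hS.1 hc
      have := upper_aux h _ hk hS (Multiset.erase_le a S) hnd
      rw [Multiset.card_erase_of_mem ha] at this
      simp only [Nat.pred_eq_sub_one] at this
      omega
  have hSD : SD (ZMod p × ZMod p) = p + T.card - 1 := by
    refine IsGreatest.csSup_eq ⟨?_, ?_⟩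
    · obtain ⟨P, -, hP⟩ := Finset.exists_subset_card_eq
        (s := (Finset.univ : Finset (ZMod p))) (n := p - 2)
        (by rw [Finset.card_univ, ZMod.card]; omega)
      obtain ⟨A, hA, hAc, hA1, hAs⟩ := lower_aux T P hTz (by omega)
      refine ⟨_, minimal_cons hA, ?_, ?_⟩
      · rw [cmul_of_nodup]
        rw [Multiset.nodup_cons]
        refine ⟨fun hmem => ?_, A.nodup⟩
        have h2 := hA1 _ hmem
        rw [Prod.fst_neg, hAs, hP] at h2
        have h3 : ((p - 2 : ℕ) : ZMod p) = -((2 : ℕ) : ZMod p) := by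
          rw [eq_neg_iff_add_eq_zero, ← Nat.cast_add, Nat.sub_add_cancel (by omega)]; simp
        rw [h3, neg_neg] at h2
        rcases h2 with h2 | h2
        · rw [ZMod.natCast_eq_zero_iff] at h2
          have := Nat.le_of_dvd (by norm_num) h2
          omega
        · have h4 : ((1 : ℕ) : ZMod p) = 0 := by
            have : ((2 : ℕ) : ZMod p) = 1 + ((1 : ℕ) : ZMod p) := by push_cast; norm_num
            rw [this] at h2
            simpa using h2
          rw [ZMod.natCast_eq_zero_iff] at h4
          have := Nat.le_of_dvd (by norm_num) h4
          omega
      · rw [Multiset.card_cons, Finset.card_val, hAc, hP]; omega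
    · rintro m ⟨S, hS, hc, rfl⟩
      have := upper_aux h _ hk hS le_rfl (nodup_of_cmul hc)
      omega
  rw [hSD, hOl]
end
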